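/- Let s be an even integer with s ≥ 6, N ≥ 2s, ν ≥ π, and let C ⊂ SO(3) be a finite set with separation distance ρ(C) ≥ ν/(N+1). Let x_j ∈ C, 0 ≤ ε ≤ 1/2, and x ∈ SO(3) with d(x,x_j) ≤ εν/(N+1); set a_ε = min{(27/124)(1−ε)^{−s} + 1, (1−ε)^{−s}}. Then, with all sums over x_i ∈ C \ {x_j} and all indices ranging over {1,2,3}: Σ|σ_N(x,x_i)| ≤ C_{0,s}a_ε/ν^s; Σ|X_n^y σ_N(x,x_i)| ≤ C_{1,s}a_ε(N+1)/ν^s; Σ|X_i^x X_n^y σ_N(x,x_i)| ≤ C_{2,s}a_ε(N+1)²/ν^s; Σ|X_i^x X_i^x X_n^y σ_N(x,x_i)| ≤ 1.2·C_{3,s}a_ε(N+1)³/ν^s; and for i,j,n pairwise distinct: Σ|X_j^x X_i^x σ_N(x,x_i) − (ε_{jin}/2)X_n^x σ_N(x,x_i)| ≤ C_{2,s}a_ε(N+1)²/ν^s and, for each k ∈ {i,j,n}, Σ|X_j^x X_i^x X_k^y σ_N(x,x_i) − (ε_{jin}/2)X_n^x X_k^y σ_N(x,x_i)| ≤ 1.2·C_{3,s}a_ε(N+1)³/ν^s.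 -/

import Mathlib

noncomputable section

abbrev Mat3 := Matrix (Fin 3) (Fin 3) ℝ

/-- membership in SO(3) -/
def IsSO3 (x : Mat3) : Prop := x.transpose * x = 1 ∧ x.det = 1

/-- rotation angle -/
def rotAngle (x : Mat3) : ℝ := Real.arccos ((Matrix.trace x - 1) / 2)

/-- generators of so(3) -/
def Lgen : Fin 3 → Mat3 :=
  ![!![0, 0, 0; 0, 0, -1; 0, 1, 0],
    !![0, 0, 1; 0, 0, 0; -1, 0, 0],
    !![0, -1, 0; 1, 0, 0; 0, 0, 0]]

/-- derivative in the first variable along generator `i` -/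
def Xx (i : Fin 3) (f : Mat3 → Mat3 → ℝ) : Mat3 → Mat3 → ℝ :=
  fun x y => deriv (fun t : ℝ => f (x * NormedSpace.exp (t • Lgen i)) y) 0

/-- derivative in the second variable along generator `i` -/
def Xy (i : Fin 3) (f : Mat3 → Mat3 → ℝ) : Mat3 → Mat3 → ℝ :=
  fun x y => deriv (fun t : ℝ => f x (y * NormedSpace.exp (t • Lgen i))) 0

/-- iterated integrals of the sign of the Chebyshev polynomial: the perfect B-spline chain -/
def fspline (s : ℕ) : ℕ → ℝ → ℝ
  | 0 => fun x => (-1 : ℝ) ^ (s - 1) * Real.sign ((Polynomial.Chebyshev.U ℝ ((s : ℤ) - 1)).eval x)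
  | (k + 1) => fun x => ∫ t in (-1 : ℝ)..x, fspline s k t

/-- the scaled perfect B-spline g̃_{s-1} -/
def gtilde (s : ℕ) (x : ℝ) : ℝ := fspline s (s - 1) (2 * x)

/-- discrete norm ‖g̃‖_{1,N} -/
def gnorm (s N : ℕ) : ℝ :=
  ∑ k ∈ Finset.Icc (-(N : ℤ)) (N : ℤ), gtilde s ((k : ℝ) / (2 * ((N : ℝ) + 1)))

/-- the trigonometric kernel σ̃_N (real-valued) -/
def sigmaT (s N : ℕ) (t : ℝ) : ℝ :=
  ((1 / (gnorm s N : ℂ)) *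
      ∑ k ∈ Finset.Icc (-(N : ℤ)) (N : ℤ),
        (gtilde s ((k : ℝ) / (2 * ((N : ℝ) + 1))) : ℂ) * Complex.exp ((k : ℂ) * t * Complex.I)).re

/-- the zonal kernel σ_N on SO(3) -/
def sigmaK (s N : ℕ) (x y : Mat3) : ℝ := sigmaT s N (rotAngle (y⁻¹ * x))

/-- rotation axis components -/
def axisComp : Fin 3 → Mat3 → ℝ :=
  ![fun x => (x 2 1 - x 1 2) / (2 * Real.sin (rotAngle x)),
    fun x => (x 0 2 - x 2 0) / (2 * Real.sin (rotAngle x)),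
    fun x => (x 1 0 - x 0 1) / (2 * Real.sin (rotAngle x))]

/-- Levi-Civita symbol on `Fin 3` -/
def eps3 (a b c : Fin 3) : ℝ :=
  if (a, b, c) = (0, 1, 2) ∨ (a, b, c) = (1, 2, 0) ∨ (a, b, c) = (2, 0, 1) then 1
  else if (a, b, c) = (2, 1, 0) ∨ (a, b, c) = (1, 0, 2) ∨ (a, b, c) = (0, 2, 1) then -1
  else 0

/-- constants c_{l,s} -/
def cConst : ℕ → ℕ → ℝ
  | 0, s => 1.02 * (Nat.factorial (s - 1)) * 2 ^ s * s
  | 1, s => 1.02 * (Nat.factorial (s - 1)) * 2 ^ s * (2 * s)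
  | 2, s => 1.02 * (Nat.factorial (s - 1)) * 2 ^ s * (4 * s + 1)
  | _, s => 1.02 * (Nat.factorial (s - 1)) * 2 ^ s * (9 * s - 2)

/-- ζ(m) for natural m -/
def zetaNat (m : ℕ) : ℝ := ∑' n : ℕ, (1 : ℝ) / ((n : ℝ) + 1) ^ m

/-- constants C_{i,s} = 124 c_{i,s} ζ(s-2) -/
def CConst (i s : ℕ) : ℝ := 124 * cConst i s * zetaNat (s - 2)

end

open scoped Real

open MeasureTheory Polynomial

/-- The breakpoints of the perfect spline, in increasing order. -/
noncomputable def splineNode (s k : ℕ) : ℝ := -Real.cos (k * (π / s))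

lemma splineNode_zero (s : ℕ) : splineNode s 0 = -1 := by simp [splineNode]

lemma splineNode_self {s : ℕ} (hs : 0 < s) : splineNode s s = 1 := by
  have : (s : ℝ) ≠ 0 := by positivity
  rw [splineNode, mul_div_cancel₀ _ this]; simp

lemma node_angle_le_pi {s k : ℕ} (hs : 0 < s) (hk : k ≤ s) : (k : ℝ) * (π / s) ≤ π := by
  have h1 : (k : ℝ) ≤ s := by exact_mod_cast hk
  have h2 : (0 : ℝ) < s := by exact_mod_cast hs
  rw [← mul_div_assoc, div_le_iff₀ h2]
  nlinarith [Real.pi_pos]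

lemma splineNode_lt_succ {s k : ℕ} (hk : k < s) : splineNode s k < splineNode s (k + 1) := by
  have hs : 0 < s := by omega
  unfold splineNode
  apply neg_lt_neg
  apply Real.cos_lt_cos_of_nonneg_of_le_pi (by positivity) (node_angle_le_pi hs hk)
  have : (0 : ℝ) < s := by exact_mod_cast hs
  push_cast
  have : 0 < π / s := by positivity
  nlinarith

lemma fspline_zero_eq {s k : ℕ} (hs : Even s) (hk : k < s) {x : ℝ}
    (hx : x ∈ Set.Ioo (splineNode s k) (splineNode s (k + 1))) :
    fspline s 0 x = (-1) ^ k := by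
  have hs0 : 0 < s := by omega
  have hsR : (0 : ℝ) < s := by exact_mod_cast hs0
  obtain ⟨h1, h2⟩ := hx
  unfold splineNode at h1 h2
  have hx1 : -1 ≤ -x := by linarith [Real.neg_one_le_cos (((k + 1 : ℕ) : ℝ) * (π / s))]
  have hx2 : -x ≤ 1 := by linarith [Real.cos_le_one ((k : ℝ) * (π / s))]
  set φ := Real.arccos (-x) with hφ
  have hcos : Real.cos φ = -x := Real.cos_arccos hx1 hx2
  have hk1 : (k : ℝ) * (π / s) < φ := by
    by_contra! h
    have := Real.cos_le_cos_of_nonneg_of_le_pi (Real.arccos_nonneg (-x))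
      (node_angle_le_pi hs0 hk.le) h
    rw [← hφ, hcos] at this
    linarith
  have hk2 : φ < ((k + 1 : ℕ) : ℝ) * (π / s) := by
    by_contra! h
    have := Real.cos_le_cos_of_nonneg_of_le_pi (by positivity) (Real.arccos_le_pi (-x)) h
    rw [← hφ, hcos] at this
    linarith
  have hφ0 : 0 < φ := lt_of_le_of_lt (by positivity) hk1
  have hφπ : φ < π := lt_of_lt_of_le hk2 (node_angle_le_pi hs0 hk)
  have hU := Polynomial.Chebyshev.U_real_cos (π - φ) ((s : ℤ) - 1)
  rw [Real.cos_pi_sub, hcos, neg_neg, Real.sin_pi_sub] at hU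
  have h3 : (((((s : ℤ) - 1 : ℤ)) : ℝ) + 1) * (π - φ) = s * π - s * φ := by push_cast; ring
  rw [h3, Real.sin_nat_mul_pi_sub, hs.neg_one_pow, one_mul] at hU
  have h4 : Real.sin (s * φ - k * π) = (-1) ^ k * Real.sin (s * φ) := Real.sin_sub_nat_mul_pi _ _
  have h5 : 0 < Real.sin (s * φ - k * π) := by
    apply Real.sin_pos_of_pos_of_lt_pi
    · have : (k : ℝ) * (π / s) * s < φ * s := by gcongr
      rw [mul_assoc, div_mul_cancel₀ _ hsR.ne'] at this
      linarith
    · have : φ * s < ((k + 1 : ℕ) : ℝ) * (π / s) * s := by gcongr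
      rw [mul_assoc, div_mul_cancel₀ _ hsR.ne'] at this
      push_cast at this
      linarith
  have h6 : 0 < Real.sin φ := Real.sin_pos_of_pos_of_lt_pi hφ0 hφπ
  have hodd : Odd (s - 1) := by
    obtain ⟨r, hr⟩ := hs
    exact ⟨r - 1, by omega⟩
  simp only [fspline]
  rw [hodd.neg_one_pow]
  rcases neg_one_pow_eq_or ℝ k with hk' | hk' <;> rw [hk'] at h4 ⊢
  · have : eval x (Chebyshev.U ℝ ((s : ℤ) - 1)) < 0 := by nlinarith
    rw [Real.sign_of_neg this]; norm_num
  · have : 0 < eval x (Chebyshev.U ℝ ((s : ℤ) - 1)) := by nlinarith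
    rw [Real.sign_of_pos this]; norm_num

lemma measurable_fspline_zero (s : ℕ) : Measurable (fspline s 0) := by
  have h1 : Measurable Real.sign := by
    unfold Real.sign
    exact Measurable.ite measurableSet_Iio measurable_const
      (Measurable.ite measurableSet_Ioi measurable_const measurable_const)
  simp only [fspline]
  exact (h1.comp (Polynomial.continuous _).measurable).const_mul _

lemma abs_fspline_zero_le (s : ℕ) (x : ℝ) : |fspline s 0 x| ≤ 1 := by
  simp only [fspline]
  rw [abs_mul, abs_pow, abs_neg, abs_one, one_pow, one_mul]
  rcases Real.sign_apply_eq (eval x (Chebyshev.U ℝ ((s : ℤ) - 1))) with h | h | h <;> rw [h] <;> simp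

lemma intervalIntegrable_fspline_zero (s : ℕ) (a b : ℝ) :
    IntervalIntegrable (fspline s 0) volume a b := by
  refine (intervalIntegrable_const (c := (1 : ℝ))).mono_fun
    (measurable_fspline_zero s).aestronglyMeasurable ?_
  filter_upwards with x
  simpa using abs_fspline_zero_le s x

lemma continuous_fspline_succ (s k : ℕ) : Continuous (fspline s (k + 1)) := by
  induction k with
  | zero =>
    exact intervalIntegral.continuous_primitive (intervalIntegrable_fspline_zero s) _
  | succ k ih =>
    exact intervalIntegral.continuous_primitive (fun a b => ih.intervalIntegrable a b) _

lemma intervalIntegrable_fspline (s k : ℕ) (a b : ℝ) :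
    IntervalIntegrable (fspline s k) volume a b := by
  cases k with
  | zero => exact intervalIntegrable_fspline_zero s a b
  | succ k => exact (continuous_fspline_succ s k).intervalIntegrable a b

lemma fspline_succ_neg_one (s k : ℕ) : fspline s (k + 1) (-1) = 0 := by
  simp [fspline]

lemma continuousAt_fspline_zero {s : ℕ} {x : ℝ}
    (hx : eval x (Chebyshev.U ℝ ((s : ℤ) - 1)) ≠ 0) : ContinuousAt (fspline s 0) x := by
  have hc : ContinuousAt (fun y => eval y (Chebyshev.U ℝ ((s : ℤ) - 1))) x :=
    (Polynomial.continuous _).continuousAt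
  rcases lt_or_gt_of_ne hx with h | h
  · apply ContinuousAt.congr (f := fun _ => (-1 : ℝ) ^ (s - 1) * (-1)) continuousAt_const
    filter_upwards [hc.eventually_lt continuousAt_const h] with y hy
    simp only [fspline]
    rw [Real.sign_of_neg hy]
  · apply ContinuousAt.congr (f := fun _ => (-1 : ℝ) ^ (s - 1) * 1) continuousAt_const
    filter_upwards [continuousAt_const.eventually_lt hc h] with y hy
    simp only [fspline]
    rw [Real.sign_of_pos hy]

lemma hasDerivAt_fspline_succ {s : ℕ} (k : ℕ) {x : ℝ}
    (hx : eval x (Chebyshev.U ℝ ((s : ℤ) - 1)) ≠ 0) :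
    HasDerivAt (fspline s (k + 1)) (fspline s k x) x := by
  cases k with
  | zero =>
    exact intervalIntegral.integral_hasDerivAt_right (intervalIntegrable_fspline_zero s _ _)
      (measurable_fspline_zero s).stronglyMeasurable.stronglyMeasurableAtFilter
      (continuousAt_fspline_zero hx)
  | succ k =>
    have hc := continuous_fspline_succ s k
    exact intervalIntegral.integral_hasDerivAt_right (hc.intervalIntegrable _ _)
      hc.stronglyMeasurable.stronglyMeasurableAtFilter hc.continuousAt

lemma chebyshev_U_pred_ne_zero {s : ℕ} (hs : 0 < s) : Chebyshev.U ℝ ((s : ℤ) - 1) ≠ 0 := by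
  have h := Chebyshev.degree_U_natCast ℝ (s - 1)
  have h2 : (((s - 1 : ℕ)) : ℤ) = (s : ℤ) - 1 := by omega
  rw [h2] at h
  intro h0
  rw [h0, degree_zero] at h
  exact absurd h (by simp)

/-- Integration by parts against a spline that vanishes at the right end point. -/
lemma integral_fspline_succ_smul_deriv {E : Type*} [NormedAddCommGroup E] [NormedSpace ℝ E]
    [CompleteSpace E] {s k : ℕ} (hs : 0 < s) (h1 : fspline s (k + 1) 1 = 0) {ψ ψ' : ℝ → E}
    (hψ : ∀ x, HasDerivAt ψ (ψ' x) x) (hψ' : Continuous ψ') :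
    ∫ x in (-1 : ℝ)..1, fspline s (k + 1) x • ψ' x = -∫ x in (-1 : ℝ)..1, fspline s k x • ψ x := by
  have hψc : Continuous ψ := continuous_iff_continuousAt.mpr fun x => (hψ x).continuousAt
  have hi1 : IntervalIntegrable (fun x => fspline s (k + 1) x • ψ' x) volume (-1) 1 :=
    ((continuous_fspline_succ s k).smul hψ').intervalIntegrable _ _
  have hi2 : IntervalIntegrable (fun x => fspline s k x • ψ x) volume (-1) 1 :=
    (intervalIntegrable_fspline s k _ _).smul_continuousOn hψc.continuousOn
  have h := MeasureTheory.integral_eq_of_hasDerivAt_off_countable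
    (a := -1) (b := 1) (fun x => fspline s (k + 1) x • ψ x)
    (fun x => fspline s (k + 1) x • ψ' x + fspline s k x • ψ x)
    (s := {x | eval x (Chebyshev.U ℝ ((s : ℤ) - 1)) = 0})
    (by
      have := (Chebyshev.U ℝ ((s : ℤ) - 1)).roots.toFinset.finite_toSet.countable
      refine this.mono fun x hx => ?_
      simp only [Finset.mem_coe, Multiset.mem_toFinset]
      exact (mem_roots (chebyshev_U_pred_ne_zero hs)).mpr hx)
    ((continuous_fspline_succ s k).smul hψc).continuousOn
    (fun x hx => (hasDerivAt_fspline_succ k hx.2).smul (hψ x))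
    (hi1.add hi2)
  rw [intervalIntegral.integral_add hi1 hi2, h1, fspline_succ_neg_one, zero_smul, zero_smul,
    sub_zero] at h
  exact eq_neg_of_add_eq_zero_left h

lemma integral_fspline_zero_smul_piece {E : Type*} [NormedAddCommGroup E] [NormedSpace ℝ E]
    {s k : ℕ} (hs : Even s) (hk : k < s) {a b : ℝ} (ha : splineNode s k ≤ a) (hab : a ≤ b)
    (hb : b ≤ splineNode s (k + 1)) (ψ : ℝ → E) :
    ∫ x in a..b, fspline s 0 x • ψ x = (-1 : ℝ) ^ k • ∫ x in a..b, ψ x := by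
  rw [← intervalIntegral.integral_smul]
  apply intervalIntegral.integral_congr_ae
  have : ∀ᵐ x : ℝ, x ≠ b := by simp [ae_iff]
  filter_upwards [this] with x hxb hx
  rw [Set.uIoc_of_le hab] at hx
  rw [fspline_zero_eq hs hk ⟨lt_of_le_of_lt ha hx.1, lt_of_lt_of_le
    (lt_of_le_of_ne hx.2 hxb) hb⟩]

/-- The weak derivative of `fspline s 0` is an alternating sum over the nodes. -/
lemma integral_fspline_zero_smul_deriv {E : Type*} [NormedAddCommGroup E] [NormedSpace ℝ E]
    [CompleteSpace E] {s : ℕ} (hs : Even s) (hs0 : 0 < s) {ψ ψ' : ℝ → E}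
    (hψ : ∀ x, HasDerivAt ψ (ψ' x) x) (hψ' : Continuous ψ') :
    ∫ x in (-1 : ℝ)..1, fspline s 0 x • ψ' x =
      ∑ k ∈ Finset.range s, (-1 : ℝ) ^ k • (ψ (splineNode s (k + 1)) - ψ (splineNode s k)) := by
  have h := intervalIntegral.sum_integral_adjacent_intervals
    (f := fun x => fspline s 0 x • ψ' x) (μ := volume) (a := splineNode s) (n := s)
    (fun k _ => (intervalIntegrable_fspline s 0 _ _).smul_continuousOn hψ'.continuousOn)
  rw [splineNode_zero, splineNode_self hs0] at h
  rw [← h]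
  apply Finset.sum_congr rfl
  intro k hk
  rw [Finset.mem_range] at hk
  rw [integral_fspline_zero_smul_piece hs hk le_rfl (splineNode_lt_succ hk).le le_rfl,
    intervalIntegral.integral_eq_sub_of_hasDerivAt (fun x _ => hψ x) (hψ'.intervalIntegrable _ _)]

lemma alternating_sum_sin (a : ℝ) (n : ℕ) :
    (∑ k ∈ Finset.range n, (-1 : ℝ) ^ k * Real.sin ((2 * k + 1) * a)) * (2 * Real.cos a) =
      -(-1) ^ n * Real.sin (2 * n * a) := by
  induction n with
  | zero => simp
  | succ n ih =>
    rw [Finset.sum_range_succ, add_mul, ih]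
    have h1 : (2 * ((n + 1 : ℕ) : ℝ) * a) = (2 * n + 1) * a + a := by push_cast; ring
    have h2 : (2 * (n : ℝ) * a) = (2 * n + 1) * a - a := by ring
    rw [h1, h2, Real.sin_add, Real.sin_sub, pow_succ]
    ring

lemma integral_fspline_zero_mul_U {s m : ℕ} (hs : Even s) (hs0 : 0 < s) :
    ((m + 1 : ℕ) : ℝ) * ∫ x in (-1 : ℝ)..1, fspline s 0 x * eval x (Chebyshev.U ℝ m) =
      -(-1) ^ (m + 1) * (2 * Real.sin ((m + 1 : ℕ) * π / (2 * s))) *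
      ∑ k ∈ Finset.range s, (-1 : ℝ) ^ k * Real.sin ((2 * k + 1) * ((m + 1 : ℕ) * π / (2 * s))) := by
  have hsR : (s : ℝ) ≠ 0 := by positivity
  have h := integral_fspline_zero_smul_deriv hs hs0
    (ψ := fun x => eval x (Chebyshev.T ℝ ((m + 1 : ℕ) : ℤ)))
    (ψ' := fun x => eval x (derivative (Chebyshev.T ℝ ((m + 1 : ℕ) : ℤ))))
    (fun x => Polynomial.hasDerivAt _ x) (Polynomial.continuous _)
  rw [← intervalIntegral.integral_const_mul, Finset.mul_sum]
  convert h using 1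
  · apply intervalIntegral.integral_congr
    intro x _
    simp only [Chebyshev.T_derivative_eq_U, eval_mul, smul_eq_mul]
    have : (((m + 1 : ℕ) : ℤ) - 1) = (m : ℤ) := by push_cast; ring
    rw [this]
    simp only [Int.cast_natCast, eval_natCast]
    ring
  · apply Finset.sum_congr rfl
    intro k _
    have hT : ∀ j : ℕ, eval (splineNode s j) (Chebyshev.T ℝ ((m + 1 : ℕ) : ℤ)) =
        (-1) ^ (m + 1) * Real.cos ((m + 1 : ℕ) * (j * (π / s))) := by
      intro j
      rw [splineNode, ← Real.cos_pi_sub, Chebyshev.T_real_cos, ← Real.cos_nat_mul_pi_sub]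
      congr 1
      push_cast; ring
    rw [hT, hT, smul_eq_mul, ← mul_sub, Real.cos_sub_cos]
    have e1 : (((m + 1 : ℕ) : ℝ) * ((k + 1 : ℕ) * (π / s)) + (m + 1 : ℕ) * (k * (π / s))) / 2 =
      (2 * k + 1) * ((m + 1 : ℕ) * π / (2 * s)) := by push_cast; field_simp; ring
    have e2 : (((m + 1 : ℕ) : ℝ) * ((k + 1 : ℕ) * (π / s)) - (m + 1 : ℕ) * (k * (π / s))) / 2 =
      ((m + 1 : ℕ) * π / (2 * s)) := by push_cast; field_simp; ring
    rw [e1, e2]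
    ring

lemma integral_fspline_zero_mul_U_of_lt {s m : ℕ} (hs : Even s) (hm : m + 1 < s) :
    ∫ x in (-1 : ℝ)..1, fspline s 0 x * eval x (Chebyshev.U ℝ m) = 0 := by
  have hs0 : 0 < s := by omega
  have hsR : (0 : ℝ) < s := by exact_mod_cast hs0
  have h := integral_fspline_zero_mul_U (m := m) hs hs0
  have h2 := alternating_sum_sin (((m + 1 : ℕ) : ℝ) * π / (2 * s)) s
  have h3 : 2 * (s : ℝ) * ((m + 1 : ℕ) * π / (2 * s)) = (m + 1 : ℕ) * π := by field_simp
  rw [h3, Real.sin_nat_mul_pi, mul_zero] at h2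
  have hc : 0 < Real.cos (((m + 1 : ℕ) : ℝ) * π / (2 * s)) := by
    apply Real.cos_pos_of_mem_Ioo
    have hm' : ((m + 1 : ℕ) : ℝ) < s := by exact_mod_cast hm
    constructor
    · have : 0 ≤ ((m + 1 : ℕ) : ℝ) * π / (2 * s) := by positivity
      linarith [Real.pi_pos]
    · rw [div_lt_div_iff₀ (by positivity) (by norm_num)]
      nlinarith [Real.pi_pos]
  have h4 := (mul_eq_zero.mp h2).resolve_right (by positivity)
  rw [h4, mul_zero] at h
  exact (mul_eq_zero.mp h).resolve_left (by positivity)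

lemma integral_fspline_zero_mul_U_pred {s : ℕ} (hs : Even s) (hs0 : 0 < s) :
    ∫ x in (-1 : ℝ)..1, fspline s 0 x * eval x (Chebyshev.U ℝ ((s - 1 : ℕ) : ℤ)) = -2 := by
  have hsR : (0 : ℝ) < s := by exact_mod_cast hs0
  have h := integral_fspline_zero_mul_U (m := s - 1) hs hs0
  rw [Nat.sub_add_cancel hs0, hs.neg_one_pow] at h
  have h3 : (s : ℝ) * π / (2 * s) = π / 2 := by field_simp
  rw [h3, Real.sin_pi_div_two] at h
  have h4 : ∀ k ∈ Finset.range s, (-1 : ℝ) ^ k * Real.sin ((2 * k + 1) * (π / 2)) = 1 := by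
    intro k _
    have : (2 * (k : ℝ) + 1) * (π / 2) = π / 2 + k * π := by ring
    rw [this, Real.sin_add_nat_mul_pi, Real.sin_pi_div_two, mul_one, ← mul_pow]
    norm_num
  rw [Finset.sum_congr rfl h4] at h
  simp only [Finset.sum_const, Finset.card_range, nsmul_eq_mul] at h
  have : (s : ℝ) * (∫ x in (-1 : ℝ)..1, fspline s 0 x * eval x (Chebyshev.U ℝ ((s - 1 : ℕ) : ℤ)))
      = s * (-2) := by linarith
  exact mul_left_cancel₀ hsR.ne' this

lemma intervalIntegrable_fspline_mul_eval (s k : ℕ) (p : ℝ[X]) (a b : ℝ) :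
    IntervalIntegrable (fun x => fspline s k x * eval x p) volume a b :=
  (intervalIntegrable_fspline s k a b).mul_continuousOn (Polynomial.continuous p).continuousOn

lemma degree_sub_smul_U_lt {n : ℕ} {p : ℝ[X]} (hp : p.degree ≤ n) :
    (p - C (p.coeff n / 2 ^ n) * Chebyshev.U ℝ n).degree < n := by
  rw [degree_lt_iff_coeff_zero]
  intro m hm
  have hU : (Chebyshev.U ℝ n).coeff n = 2 ^ n := by
    have := Chebyshev.leadingCoeff_U_natCast ℝ n
    rwa [leadingCoeff, Chebyshev.natDegree_U_natCast] at this
  rcases hm.eq_or_lt with rfl | hm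
  · rw [coeff_sub, coeff_C_mul, hU]
    field_simp
    ring
  · rw [coeff_sub, coeff_C_mul, coeff_eq_zero_of_degree_lt (lt_of_le_of_lt hp (by exact_mod_cast hm)),
      coeff_eq_zero_of_degree_lt
        (lt_of_le_of_lt (Chebyshev.degree_U_natCast ℝ n).le (by exact_mod_cast hm))]
    simp

lemma integral_fspline_zero_mul_eval_of_degree_lt {s : ℕ} (hs : Even s) (n : ℕ) :
    n < s → ∀ p : ℝ[X], p.degree < n → ∫ x in (-1 : ℝ)..1, fspline s 0 x * eval x p = 0 := by
  induction n with
  | zero =>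
    intro _ p hp
    have : p = 0 := by simpa using hp
    simp [this]
  | succ n ih =>
    intro hn p hp
    have hp' : p.degree ≤ n := by
      rw [degree_le_iff_coeff_zero]
      intro m hm
      exact coeff_eq_zero_of_degree_lt (lt_of_lt_of_le hp (by exact_mod_cast hm))
    have h1 := ih (by omega) _ (degree_sub_smul_U_lt hp')
    have h2 := integral_fspline_zero_mul_U_of_lt (m := n) hs hn
    have h3 : ∀ x, fspline s 0 x * eval x p =
        fspline s 0 x * eval x (p - C (p.coeff n / 2 ^ n) * Chebyshev.U ℝ n) +
        (p.coeff n / 2 ^ n) * (fspline s 0 x * eval x (Chebyshev.U ℝ n)) := by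
      intro x; simp; ring
    simp_rw [h3]
    rw [intervalIntegral.integral_add (intervalIntegrable_fspline_mul_eval _ _ _ _ _)
      ((intervalIntegrable_fspline_mul_eval _ _ _ _ _).const_mul _), h1,
      intervalIntegral.integral_const_mul, h2]
    simp

lemma exists_antiderivative (p : ℝ[X]) (n : ℕ) (hp : p.degree < n) :
    ∃ q : ℝ[X], derivative q = p ∧ q.degree < (n + 1 : ℕ) := by
  refine ⟨∑ i ∈ Finset.range n, monomial (i + 1) (p.coeff i / (i + 1)), ?_, ?_⟩
  · ext m
    simp only [derivative_sum, derivative_monomial, finsetSum_coeff, coeff_monomial,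
      Nat.add_sub_cancel]
    by_cases hm : m < n
    · rw [Finset.sum_eq_single m]
      · simp only [if_true]
        push_cast
        field_simp
      · intro b _ hb
        rw [if_neg hb]
      · intro h; exact absurd (Finset.mem_range.mpr hm) h
    · rw [coeff_eq_zero_of_degree_lt (lt_of_lt_of_le hp (by exact_mod_cast not_lt.mp hm))]
      apply Finset.sum_eq_zero
      intro b hb
      rw [if_neg]
      have := Finset.mem_range.mp hb
      omega
  · refine lt_of_le_of_lt (degree_sum_le _ _) ?_
    rw [Finset.sup_lt_iff (by exact WithBot.bot_lt_coe _)]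
    intro i hi
    refine lt_of_le_of_lt (degree_monomial_le _ _) ?_
    have := Finset.mem_range.mp hi
    exact_mod_cast (by omega : i + 1 < n + 1)

lemma integral_fspline_mul_eval_eq_zero {s : ℕ} (hs : Even s) (k : ℕ) :
    ∀ n : ℕ, n + k < s → ∀ p : ℝ[X], p.degree < n →
      ∫ x in (-1 : ℝ)..1, fspline s k x * eval x p = 0 := by
  induction k with
  | zero => exact fun n hn p hp => integral_fspline_zero_mul_eval_of_degree_lt hs n (by omega) p hp
  | succ k ih =>
    intro n hn p hp
    have h1 : fspline s (k + 1) 1 = 0 := by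
      have := ih 1 (by omega) 1 (by simp)
      simpa [fspline] using this
    obtain ⟨q, rfl, hq⟩ := exists_antiderivative p n hp
    have h := integral_fspline_succ_smul_deriv (s := s) (k := k) (by omega) h1
      (ψ := fun x => eval x q) (ψ' := fun x => eval x (derivative q))
      (fun x => q.hasDerivAt x) (Polynomial.continuous _)
    simp only [smul_eq_mul] at h
    rw [h, ih (n + 1) (by omega) q hq, neg_zero]

lemma fspline_succ_one {s k : ℕ} (hs : Even s) (hk : k + 1 < s) : fspline s (k + 1) 1 = 0 := by
  have := integral_fspline_mul_eval_eq_zero hs k 1 (by omega) 1 (by simp)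
  simpa [fspline] using this

lemma integral_fspline_zero_mul_pow {s : ℕ} (hs : Even s) (hs0 : 0 < s) :
    ∫ x in (-1 : ℝ)..1, fspline s 0 x * x ^ (s - 1) = -2 / 2 ^ (s - 1) := by
  have hd : (X ^ (s - 1) : ℝ[X]).degree ≤ (s - 1 : ℕ) := by simp
  have h1 := integral_fspline_zero_mul_eval_of_degree_lt hs (s - 1) (by omega) _
    (degree_sub_smul_U_lt hd)
  have h2 := integral_fspline_zero_mul_U_pred hs hs0
  have h3 : ∀ x, fspline s 0 x * x ^ (s - 1) =
      fspline s 0 x * eval x (X ^ (s - 1) - C ((X ^ (s - 1) : ℝ[X]).coeff (s - 1) / 2 ^ (s - 1)) *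
        Chebyshev.U ℝ ((s - 1 : ℕ) : ℤ)) +
      (1 / 2 ^ (s - 1)) * (fspline s 0 x * eval x (Chebyshev.U ℝ ((s - 1 : ℕ) : ℤ))) := by
    intro x; simp; ring
  simp_rw [h3]
  rw [intervalIntegral.integral_add (intervalIntegrable_fspline_mul_eval _ _ _ _ _)
    ((intervalIntegrable_fspline_mul_eval _ _ _ _ _).const_mul _), h1,
    intervalIntegral.integral_const_mul, h2]
  ring

lemma integral_fspline_eq_moment {s : ℕ} (hs : Even s) (j : ℕ) : ∀ k, k + j < s →
    ∫ x in (-1 : ℝ)..1, fspline s (k + j) x =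
      (-1) ^ j / (j.factorial : ℝ) * ∫ x in (-1 : ℝ)..1, fspline s k x * x ^ j := by
  induction j with
  | zero => simp
  | succ j ih =>
    intro k hk
    have h := integral_fspline_succ_smul_deriv (s := s) (k := k) (by omega)
      (fspline_succ_one hs (by omega))
      (ψ := fun x => x ^ (j + 1)) (ψ' := fun x => ((j + 1 : ℕ) : ℝ) * x ^ j)
      (fun x => by simpa using hasDerivAt_pow (j + 1) x) (by fun_prop)
    have h2 := ih (k + 1) (by omega)
    rw [show k + 1 + j = k + (j + 1) by ring] at h2
    rw [h2]
    simp only [smul_eq_mul] at h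
    have h3 : ∫ x in (-1 : ℝ)..1, fspline s (k + 1) x * (((j + 1 : ℕ) : ℝ) * x ^ j) =
        ((j + 1 : ℕ) : ℝ) * ∫ x in (-1 : ℝ)..1, fspline s (k + 1) x * x ^ j := by
      rw [← intervalIntegral.integral_const_mul]
      congr 1; ext x; ring
    rw [h3] at h
    rw [Nat.factorial_succ, pow_succ]
    have h4 : (j.factorial : ℝ) ≠ 0 := by positivity
    have h5 : (((j + 1 : ℕ)) : ℝ) ≠ 0 := by positivity
    rw [show ∫ x in (-1 : ℝ)..1, fspline s k x * x ^ (j + 1) = -(((j + 1 : ℕ) : ℝ) *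
      ∫ x in (-1 : ℝ)..1, fspline s (k + 1) x * x ^ j) by linarith]
    push_cast at h5 ⊢
    field_simp

lemma integral_fspline_pred {s : ℕ} (hs : Even s) (hs0 : 0 < s) :
    ∫ x in (-1 : ℝ)..1, fspline s (s - 1) x = 2 / (2 ^ (s - 1) * ((s - 1).factorial : ℝ)) := by
  have h := integral_fspline_eq_moment hs (s - 1) 0 (by omega)
  have hodd : Odd (s - 1) := by
    obtain ⟨r, hr⟩ := hs
    exact ⟨r - 1, by omega⟩
  rw [zero_add, integral_fspline_zero_mul_pow hs hs0, hodd.neg_one_pow] at h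
  rw [h]
  have h4 : ((s - 1).factorial : ℝ) ≠ 0 := by positivity
  field_simp

lemma fspline_one_piece {s k : ℕ} (hs : Even s) (hk : k < s) {x : ℝ}
    (hx : x ∈ Set.Icc (splineNode s k) (splineNode s (k + 1))) :
    fspline s 1 x = fspline s 1 (splineNode s k) + (-1) ^ k * (x - splineNode s k) := by
  have h := intervalIntegral.integral_add_adjacent_intervals
    (intervalIntegrable_fspline_zero s (-1) (splineNode s k))
    (intervalIntegrable_fspline_zero s (splineNode s k) x)
  have h2 := integral_fspline_zero_smul_piece hs hk le_rfl hx.1 hx.2 (fun _ => (1 : ℝ))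
  simp only [smul_eq_mul, mul_one, intervalIntegral.integral_const] at h2
  rw [h2] at h
  exact h.symm

lemma cos_node_angle_half_pos {s : ℕ} (hs : 2 ≤ s) : 0 < Real.cos (π / s / 2) := by
  have h2 : (2 : ℝ) ≤ s := by exact_mod_cast hs
  apply Real.cos_pos_of_mem_Ioo
  have h1 : π / s ≤ π / 2 := by gcongr
  have h3 : 0 ≤ π / s := by positivity
  constructor <;> linarith [Real.pi_pos]

lemma splineNode_succ_sub {s : ℕ} (hs : 2 ≤ s) (k : ℕ) :
    splineNode s (k + 1) - splineNode s k =
      Real.tan (π / s / 2) * (Real.sin (k * (π / s)) + Real.sin ((k + 1 : ℕ) * (π / s))) := by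
  have hc := cos_node_angle_half_pos hs
  unfold splineNode
  set β := π / s
  have e1 : (k : ℝ) * β = (2 * k + 1) * (β / 2) - β / 2 := by ring
  have e2 : ((k + 1 : ℕ) : ℝ) * β = (2 * k + 1) * (β / 2) + β / 2 := by push_cast; ring
  rw [e1, e2, Real.cos_add, Real.cos_sub, Real.sin_add, Real.sin_sub, Real.tan_eq_sin_div_cos]
  field_simp
  ring

lemma fspline_one_node {s : ℕ} (hs : Even s) (hs2 : 2 ≤ s) (k : ℕ) (hk : k ≤ s) :
    fspline s 1 (splineNode s k) =
      -(-1) ^ k * (Real.tan (π / s / 2) * Real.sin (k * (π / s))) := by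
  induction k with
  | zero => rw [splineNode_zero, fspline_succ_neg_one]; simp
  | succ k ih =>
    rw [fspline_one_piece hs hk ⟨(splineNode_lt_succ hk).le, le_rfl⟩, ih (by omega),
      splineNode_succ_sub hs2, pow_succ]
    ring

lemma exists_piece {s : ℕ} (hs : 0 < s) {x : ℝ} (hx : x ∈ Set.Icc (-1 : ℝ) 1) :
    ∃ k < s, x ∈ Set.Icc (splineNode s k) (splineNode s (k + 1)) := by
  by_contra! h
  have : ∀ k ≤ s, splineNode s k ≤ x := by
    intro k
    induction k with
    | zero => intro _; rw [splineNode_zero]; exact hx.1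
    | succ k ih =>
      intro hk
      by_contra! h2
      exact h k (by omega) ⟨ih (by omega), h2.le⟩
  have h1 := this (s - 1) (by omega)
  refine h (s - 1) (by omega) ⟨h1, ?_⟩
  rw [Nat.sub_add_cancel hs, splineNode_self hs]
  exact hx.2

lemma tan_node_angle_half_nonneg {s : ℕ} (hs : 2 ≤ s) : 0 ≤ Real.tan (π / s / 2) := by
  rw [Real.tan_eq_sin_div_cos]
  refine div_nonneg (Real.sin_nonneg_of_nonneg_of_le_pi (by positivity) ?_)
    (cos_node_angle_half_pos hs).le
  have h2 : (2 : ℝ) ≤ s := by exact_mod_cast hs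
  have h1 : π / s ≤ π / 2 := by gcongr
  linarith [Real.pi_pos]

lemma sin_node_angle_nonneg {s k : ℕ} (hs : 0 < s) (hk : k ≤ s) :
    0 ≤ Real.sin (k * (π / s)) :=
  Real.sin_nonneg_of_nonneg_of_le_pi (by positivity) (node_angle_le_pi hs hk)

/-- Every point of `[-1, 1]` lies in a piece, within `tan (π / s / 2)` of its spline zero. -/
lemma exists_piece_abs_sub_le {s : ℕ} (hs2 : 2 ≤ s) {x : ℝ}
    (hx : x ∈ Set.Icc (-1 : ℝ) 1) : ∃ k < s, x ∈ Set.Icc (splineNode s k) (splineNode s (k + 1)) ∧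
      |x - splineNode s k - Real.tan (π / s / 2) * Real.sin (k * (π / s))| ≤
        Real.tan (π / s / 2) := by
  obtain ⟨k, hk, hxk⟩ := exists_piece (by omega : 0 < s) hx
  refine ⟨k, hk, hxk, ?_⟩
  have ht := tan_node_angle_half_nonneg hs2
  have h1 := sin_node_angle_nonneg (k := k) (by omega : 0 < s) hk.le
  have h2 := sin_node_angle_nonneg (k := k + 1) (by omega : 0 < s) hk
  have h3 := Real.sin_le_one (k * (π / s))
  have h4 := Real.sin_le_one ((k + 1 : ℕ) * (π / s))
  have h5 := splineNode_succ_sub hs2 k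
  rw [abs_le]
  constructor <;> nlinarith [hxk.1, hxk.2]

lemma abs_fspline_one_le {s : ℕ} (hs : Even s) (hs2 : 2 ≤ s) {x : ℝ}
    (hx : x ∈ Set.Icc (-1 : ℝ) 1) : |fspline s 1 x| ≤ Real.tan (π / s / 2) := by
  obtain ⟨k, hk, hxk, h⟩ := exists_piece_abs_sub_le hs2 hx
  rw [fspline_one_piece hs hk hxk, fspline_one_node hs hs2 k hk.le]
  have : -(-1 : ℝ) ^ k * (Real.tan (π / s / 2) * Real.sin (k * (π / s))) +
      (-1) ^ k * (x - splineNode s k) =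
      (-1) ^ k * (x - splineNode s k - Real.tan (π / s / 2) * Real.sin (k * (π / s))) := by ring
  rwa [this, abs_mul, abs_pow, abs_neg, abs_one, one_pow, one_mul]

lemma fspline_two_piece {s k : ℕ} (hs : Even s) (hs2 : 2 ≤ s) (hk : k < s) {x : ℝ}
    (hx : x ∈ Set.Icc (splineNode s k) (splineNode s (k + 1))) :
    fspline s 2 x = fspline s 2 (splineNode s k) + (-1) ^ k *
      ((x - splineNode s k - Real.tan (π / s / 2) * Real.sin (k * (π / s))) ^ 2 -
        (Real.tan (π / s / 2) * Real.sin (k * (π / s))) ^ 2) / 2 := by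
  have h := intervalIntegral.integral_add_adjacent_intervals
    (intervalIntegrable_fspline s 1 (-1) (splineNode s k))
    (intervalIntegrable_fspline s 1 (splineNode s k) x)
  have h2 : ∫ y in splineNode s k..x, fspline s 1 y = (-1) ^ k *
      ((x - splineNode s k - Real.tan (π / s / 2) * Real.sin (k * (π / s))) ^ 2 -
        (Real.tan (π / s / 2) * Real.sin (k * (π / s))) ^ 2) / 2 := by
    have e : ∫ y in splineNode s k..x, fspline s 1 y = ∫ y in splineNode s k..x,
        (-1) ^ k * (y - splineNode s k - Real.tan (π / s / 2) * Real.sin (k * (π / s))) := by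
      apply intervalIntegral.integral_congr
      intro y hy
      rw [Set.uIcc_of_le hx.1] at hy
      simp only
      rw [fspline_one_piece hs hk ⟨hy.1, hy.2.trans hx.2⟩, fspline_one_node hs hs2 k hk.le]
      ring
    rw [e, intervalIntegral.integral_eq_sub_of_hasDerivAt (f := fun y => (-1) ^ k *
      ((y - splineNode s k - Real.tan (π / s / 2) * Real.sin (k * (π / s))) ^ 2) / 2)]
    · ring
    · intro y _
      have := (((((hasDerivAt_id y).sub_const (splineNode s k)).sub_const
        (Real.tan (π / s / 2) * Real.sin (k * (π / s)))).pow 2).const_mul ((-1 : ℝ) ^ k)).div_const 2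
      refine this.congr_deriv ?_
      simp; ring
    · exact (by fun_prop : Continuous fun y : ℝ => (-1) ^ k *
        (y - splineNode s k - Real.tan (π / s / 2) * Real.sin (k * (π / s)))).intervalIntegrable _ _
  rw [h2] at h
  exact h.symm

lemma fspline_two_node {s : ℕ} (hs : Even s) (hs3 : 3 ≤ s) (k : ℕ) (hk : k ≤ s) :
    fspline s 2 (splineNode s k) =
      -(-1) ^ k * (Real.tan (π / s / 2) ^ 2 * Real.tan (π / s) * Real.sin (2 * k * (π / s)) / 4) := by
  induction k with
  | zero => rw [splineNode_zero, fspline_succ_neg_one]; simp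
  | succ k ih =>
    have hc : 0 < Real.cos (π / s) := by
      have h2 : (3 : ℝ) ≤ s := by exact_mod_cast hs3
      apply Real.cos_pos_of_mem_Ioo
      have h1 : π / s ≤ π / 3 := by gcongr
      have h3 : 0 ≤ π / s := by positivity
      constructor <;> linarith [Real.pi_pos]
    rw [fspline_two_piece hs (by omega) hk ⟨(splineNode_lt_succ hk).le, le_rfl⟩, ih (by omega),
      splineNode_succ_sub (by omega), pow_succ]
    set β := π / s
    have e1 : 2 * (k : ℝ) * β = 2 * (k * β) := by ring
    have e2 : 2 * ((k + 1 : ℕ) : ℝ) * β = 2 * (k * β + β) := by push_cast; ring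
    have e3 : ((k + 1 : ℕ) : ℝ) * β = k * β + β := by push_cast; ring
    rw [e1, e2, e3, Real.sin_two_mul, Real.sin_two_mul, Real.tan_eq_sin_div_cos β,
      Real.sin_add, Real.cos_add]
    generalize Real.tan (β / 2) = t
    have hp := Real.sin_sq_add_cos_sq β
    generalize Real.sin (k * β) = a
    generalize Real.cos (k * β) = b
    generalize Real.sin β = c at *
    generalize Real.cos β = d at *
    field_simp
    linear_combination (4 * (-1) ^ k * t ^ 2 * (a ^ 2 * d + a * b * c)) * hp

lemma tan_le_of_le {x b c : ℝ} (hx : 0 ≤ x) (hxb : x ≤ b) (hc : 0 < c) (hb : c ≤ 1 - b ^ 2 / 2) :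
    Real.tan x ≤ x / c := by
  have h1 : 1 - x ^ 2 / 2 ≤ Real.cos x := Real.one_sub_sq_div_two_le_cos
  have h2 : c ≤ Real.cos x := by nlinarith
  rw [Real.tan_eq_sin_div_cos]
  exact div_le_div₀ hx (Real.sin_le hx) hc h2

lemma tan_node_angle_half_le {s : ℕ} (hs : 6 ≤ s) : Real.tan (π / s / 2) ≤ 1.63 / s := by
  have h6 : (6 : ℝ) ≤ s := by exact_mod_cast hs
  have hpi := Real.pi_lt_d2
  have h1 : π / s ≤ 3.15 / 6 := by gcongr
  refine (tan_le_of_le (b := 0.2625) (c := 0.9655) (by positivity) (by linarith) (by norm_num)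
    (by norm_num)).trans ?_
  have : π / s / 2 / 0.9655 = (π / 2 / 0.9655) / s := by ring
  rw [this]
  gcongr
  rw [div_div, div_le_iff₀ (by norm_num)]
  linarith [Real.pi_lt_d4]

lemma tan_node_angle_le {s : ℕ} (hs : 6 ≤ s) : Real.tan (π / s) ≤ 0.61 := by
  have h6 : (6 : ℝ) ≤ s := by exact_mod_cast hs
  have h1 : π / s ≤ 3.1416 / 6 := by gcongr; linarith [Real.pi_lt_d4]
  refine (tan_le_of_le (b := 0.5236) (c := 0.862) (by positivity) (by linarith) (by norm_num)
    (by norm_num)).trans ?_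
  rw [div_le_iff₀ (by norm_num)]
  linarith

lemma abs_fspline_two_le {s : ℕ} (hs : Even s) (hs6 : 6 ≤ s) {x : ℝ}
    (hx : x ∈ Set.Icc (-1 : ℝ) 1) : |fspline s 2 x| ≤ 1.74 / s ^ 2 := by
  have hsR : (6 : ℝ) ≤ s := by exact_mod_cast hs6
  obtain ⟨k, hk, hxk, h⟩ := exists_piece_abs_sub_le (by omega : 2 ≤ s) hx
  rw [fspline_two_piece hs (by omega) hk hxk, fspline_two_node hs (by omega) k hk.le]
  have ht := tan_node_angle_half_nonneg (by omega : 2 ≤ s)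
  have ht2 := tan_node_angle_half_le hs6
  have hb := tan_node_angle_le hs6
  have hb0 : 0 ≤ Real.tan (π / s) := by
    apply Real.tan_nonneg_of_nonneg_of_le_pi_div_two (by positivity)
    have : π / s ≤ π / 2 := by gcongr; linarith
    exact this
  have hs1 := sin_node_angle_nonneg (k := k) (by omega : 0 < s) hk.le
  have hs2 := Real.sin_le_one (k * (π / s))
  set t := Real.tan (π / s / 2)
  set r := x - splineNode s k - t * Real.sin (k * (π / s))
  have h1 : |(-1 : ℝ) ^ k * (r ^ 2 - (t * Real.sin (k * (π / s))) ^ 2) / 2| ≤ t ^ 2 / 2 := by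
    rw [abs_div, abs_mul, abs_pow, abs_neg, abs_one, one_pow, one_mul, abs_two]
    gcongr
    have hr : r ^ 2 ≤ t ^ 2 := sq_le_sq' (abs_le.mp h).1 (abs_le.mp h).2
    have hr2 : (t * Real.sin (k * (π / s))) ^ 2 ≤ t ^ 2 := by
      apply pow_le_pow_left₀ (by positivity)
      nlinarith
    rw [abs_le]
    constructor <;> nlinarith [sq_nonneg r, sq_nonneg (t * Real.sin (k * (π / s)))]
  have h2 : |-(-1 : ℝ) ^ k * (t ^ 2 * Real.tan (π / s) * Real.sin (2 * k * (π / s)) / 4)| ≤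
      t ^ 2 * 0.61 / 4 := by
    rw [abs_mul, abs_neg, abs_pow, abs_neg, abs_one, one_pow, one_mul, abs_div, abs_mul, abs_mul,
      abs_of_nonneg hb0, abs_of_nonneg (sq_nonneg t), abs_of_pos (by norm_num : (0 : ℝ) < 4)]
    refine div_le_div_of_nonneg_right ?_ (by norm_num)
    have h3 := Real.abs_sin_le_one (2 * k * (π / s))
    calc t ^ 2 * Real.tan (π / s) * |Real.sin (2 * k * (π / s))|
        ≤ t ^ 2 * Real.tan (π / s) * 1 := by gcongr
      _ ≤ t ^ 2 * 0.61 := by rw [mul_one]; gcongr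
  refine (abs_add_le _ _).trans ?_
  have h4 : t ^ 2 ≤ (1.63 / s) ^ 2 := by gcongr
  have h5 : (1.63 / (s : ℝ)) ^ 2 = 2.6569 * (1 / s ^ 2) := by ring
  have h6 : 0 ≤ 1 / (s : ℝ) ^ 2 := by positivity
  have h7 : 1.74 / (s : ℝ) ^ 2 = 1.74 * (1 / s ^ 2) := by ring
  rw [h7]
  linarith

/-- The Fourier integral of `x ^ l * fspline s k x` over `[-1, 1]`. -/
noncomputable def splineFourier (s l k : ℕ) (ξ : ℝ) : ℂ :=
  ∫ x in (-1 : ℝ)..1, fspline s k x • ((x : ℂ) ^ l * Complex.exp (x * ξ * Complex.I))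

lemma hasDerivAt_pow_mul_exp (l : ℕ) (ξ x : ℝ) :
    HasDerivAt (fun y : ℝ => (y : ℂ) ^ l * Complex.exp (y * ξ * Complex.I))
      (l * ((x : ℂ) ^ (l - 1) * Complex.exp (x * ξ * Complex.I)) +
        ξ * Complex.I * ((x : ℂ) ^ l * Complex.exp (x * ξ * Complex.I))) x := by
  have h1 : HasDerivAt (fun y : ℂ => y ^ l * Complex.exp (y * ξ * Complex.I))
      (l * (x : ℂ) ^ (l - 1) * Complex.exp (x * ξ * Complex.I) +
        (x : ℂ) ^ l * (Complex.exp (x * ξ * Complex.I) * (1 * ξ * Complex.I))) x :=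
    (hasDerivAt_pow l (x : ℂ)).mul ((((hasDerivAt_id (x : ℂ)).mul_const _).mul_const _).cexp)
  convert h1.comp_ofReal using 1
  ring

lemma intervalIntegrable_fspline_smul (s k : ℕ) {ψ : ℝ → ℂ} (hψ : Continuous ψ) (a b : ℝ) :
    IntervalIntegrable (fun x => fspline s k x • ψ x) volume a b :=
  (intervalIntegrable_fspline s k a b).smul_continuousOn hψ.continuousOn

lemma norm_exp_mul_I (x ξ : ℝ) : ‖Complex.exp (x * ξ * Complex.I)‖ = 1 := by
  rw [← Complex.ofReal_mul, Complex.norm_exp_ofReal_mul_I]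

lemma integral_fspline_smul_deriv_eq (s l k : ℕ) (ξ : ℝ) :
    ∫ x in (-1 : ℝ)..1, fspline s k x • ((l : ℂ) * ((x : ℂ) ^ (l - 1) *
      Complex.exp (x * ξ * Complex.I)) +
        ξ * Complex.I * ((x : ℂ) ^ l * Complex.exp (x * ξ * Complex.I))) =
      l * splineFourier s (l - 1) k ξ + ξ * Complex.I * splineFourier s l k ξ := by
  unfold splineFourier
  rw [← intervalIntegral.integral_const_mul, ← intervalIntegral.integral_const_mul,
    ← intervalIntegral.integral_add]
  · congr 1
    funext x
    simp only [Complex.real_smul]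
    ring
  · exact (intervalIntegrable_fspline_smul s k (by fun_prop) _ _).const_mul _
  · exact (intervalIntegrable_fspline_smul s k (by fun_prop) _ _).const_mul _

lemma abs_mul_norm_splineFourier_succ_le {s k : ℕ} (hs : Even s) (hk : k + 1 < s) (l : ℕ) (ξ : ℝ) :
    |ξ| * ‖splineFourier s l (k + 1) ξ‖ ≤
      ‖splineFourier s l k ξ‖ + l * ‖splineFourier s (l - 1) (k + 1) ξ‖ := by
  have h := integral_fspline_succ_smul_deriv (by omega) (fspline_succ_one hs hk)
    (hasDerivAt_pow_mul_exp l ξ) (by fun_prop)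
  rw [integral_fspline_smul_deriv_eq] at h
  change _ = -splineFourier s l k ξ at h
  have h2 : ξ * Complex.I * splineFourier s l (k + 1) ξ =
      -(splineFourier s l k ξ + l * splineFourier s (l - 1) (k + 1) ξ) := by
    linear_combination h
  have h3 := congrArg norm h2
  rw [norm_mul, norm_mul, Complex.norm_I, Complex.norm_real, mul_one, norm_neg,
    Real.norm_eq_abs] at h3
  rw [h3]
  refine (norm_add_le _ _).trans ?_
  simp

lemma splineNode_mem_Icc (s k : ℕ) : |splineNode s k| ≤ 1 := by
  rw [splineNode, abs_neg]
  exact Real.abs_cos_le_one _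

lemma abs_mul_norm_splineFourier_zero_le {s : ℕ} (hs : Even s) (hs0 : 0 < s) (l : ℕ) (ξ : ℝ) :
    |ξ| * ‖splineFourier s l 0 ξ‖ ≤ 2 * s + l * ‖splineFourier s (l - 1) 0 ξ‖ := by
  have h := integral_fspline_zero_smul_deriv hs hs0
    (hasDerivAt_pow_mul_exp l ξ) (by fun_prop)
  rw [integral_fspline_smul_deriv_eq] at h
  have h4 : ‖l * splineFourier s (l - 1) 0 ξ + ξ * Complex.I * splineFourier s l 0 ξ‖ ≤ 2 * s := by
    rw [h]
    refine (norm_sum_le _ _).trans ?_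
    have : ∀ k ∈ Finset.range s, ‖(-1 : ℝ) ^ k • (((splineNode s (k + 1) : ℝ) : ℂ) ^ l *
        Complex.exp ((splineNode s (k + 1) : ℝ) * ξ * Complex.I) - ((splineNode s k : ℝ) : ℂ) ^ l *
        Complex.exp ((splineNode s k : ℝ) * ξ * Complex.I))‖ ≤ 2 := by
      intro k _
      have hb : ∀ m, ‖((splineNode s m : ℝ) : ℂ) ^ l *
          Complex.exp ((splineNode s m : ℝ) * ξ * Complex.I)‖ ≤ 1 := by
        intro m
        rw [norm_mul, norm_exp_mul_I, mul_one, norm_pow, Complex.norm_real]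
        exact pow_le_one₀ (norm_nonneg _) (splineNode_mem_Icc s m)
      rw [norm_smul, norm_pow, norm_neg, norm_one, one_pow, one_mul]
      refine (norm_sub_le _ _).trans ?_
      linarith [hb k, hb (k + 1)]
    refine (Finset.sum_le_sum this).trans ?_
    simp [mul_comm]
  have h2 : ‖(ξ : ℂ) * Complex.I * splineFourier s l 0 ξ‖ ≤
      ‖l * splineFourier s (l - 1) 0 ξ + ξ * Complex.I * splineFourier s l 0 ξ‖ +
        ‖(l : ℂ) * splineFourier s (l - 1) 0 ξ‖ := by
    have := norm_sub_le (l * splineFourier s (l - 1) 0 ξ + ξ * Complex.I * splineFourier s l 0 ξ)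
      (l * splineFourier s (l - 1) 0 ξ)
    simpa using this
  rw [norm_mul, norm_mul, Complex.norm_I, Complex.norm_real, mul_one, Real.norm_eq_abs,
    norm_mul, Complex.norm_natCast] at h2
  linarith

lemma integral_abs_pow (l : ℕ) : ∫ x in (-1 : ℝ)..1, |x| ^ l = 2 / (l + 1) := by
  have h : ∀ a b : ℝ, IntervalIntegrable (fun x : ℝ => |x| ^ l) volume a b := fun a b =>
    Continuous.intervalIntegrable (by fun_prop) _ _
  have h1 : ∫ x in (0 : ℝ)..1, |x| ^ l = 1 / (l + 1) := by
    rw [intervalIntegral.integral_congr (g := fun x => x ^ l)]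
    · simp
    · intro x hx
      rw [Set.uIcc_of_le zero_le_one] at hx
      simp only [abs_of_nonneg hx.1]
  have h2 : ∫ x in (-1 : ℝ)..0, |x| ^ l = 1 / (l + 1) := by
    have := intervalIntegral.integral_comp_neg (a := 0) (b := 1) (fun x : ℝ => |x| ^ l)
    simp only [abs_neg, neg_zero] at this
    rw [← this, h1]
  rw [← intervalIntegral.integral_add_adjacent_intervals (h _ 0) (h _ _), h1, h2]
  ring

lemma norm_splineFourier_le {s k : ℕ} {b : ℝ} (hb : ∀ x ∈ Set.Icc (-1 : ℝ) 1, |fspline s k x| ≤ b)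
    (l : ℕ) (ξ : ℝ) : ‖splineFourier s l k ξ‖ ≤ b * (2 / (l + 1)) := by
  have h : ∀ x ∈ Set.Ioc (-1 : ℝ) 1,
      ‖fspline s k x • ((x : ℂ) ^ l * Complex.exp (x * ξ * Complex.I))‖ ≤ b * |x| ^ l := by
    intro x hx
    rw [norm_smul, norm_mul, norm_exp_mul_I, mul_one, norm_pow, Complex.norm_real]
    exact mul_le_mul_of_nonneg_right (hb x ⟨hx.1.le, hx.2⟩) (by positivity)
  refine (intervalIntegral.norm_integral_le_of_norm_le (by norm_num) (ae_of_all _ h)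
    (by apply Continuous.intervalIntegrable; fun_prop)).trans (le_of_eq ?_)
  rw [intervalIntegral.integral_const_mul, integral_abs_pow]

/-- The basic decay estimates, obtained from `splineFourier` by repeated integration by parts. -/
lemma pow_mul_norm_splineFourier_zero_le {s : ℕ} (hs : Even s) (ξ b : ℝ) (m k : ℕ)
    (hb : ‖splineFourier s 0 m ξ‖ ≤ b) (hk : k + m < s) :
    |ξ| ^ k * ‖splineFourier s 0 (k + m) ξ‖ ≤ b := by
  induction k with
  | zero => simpa using hb
  | succ k ih =>
    have h := abs_mul_norm_splineFourier_succ_le hs (k := k + m) (by omega) 0 ξ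
    have h2 := ih (by omega)
    have h3 : |ξ| ^ k * (|ξ| * ‖splineFourier s 0 (k + m + 1) ξ‖) ≤
        |ξ| ^ k * ‖splineFourier s 0 (k + m) ξ‖ := by
      gcongr; simpa using h
    rw [show k + 1 + m = k + m + 1 by ring, pow_succ, mul_assoc]
    linarith

lemma pow_mul_norm_splineFourier_succ_le {s : ℕ} (hs : Even s) (ξ b : ℝ) (l m k : ℕ)
    (u : ℕ → ℝ) (hb : ‖splineFourier s (l + 1) m ξ‖ ≤ b)
    (hu : ∀ j, j + 1 + m < s → |ξ| ^ j * ‖splineFourier s l (j + 1 + m) ξ‖ ≤ u j)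
    (hk : k + m < s) :
    |ξ| ^ k * ‖splineFourier s (l + 1) (k + m) ξ‖ ≤ b + (l + 1) * ∑ j ∈ Finset.range k, u j := by
  induction k with
  | zero => simpa using hb
  | succ k ih =>
    have h := abs_mul_norm_splineFourier_succ_le hs (k := k + m) (by omega) (l + 1) ξ
    have h2 := ih (by omega)
    have h4 := hu k (by omega)
    have h3 : |ξ| ^ k * (|ξ| * ‖splineFourier s (l + 1) (k + m + 1) ξ‖) ≤
        |ξ| ^ k * (‖splineFourier s (l + 1) (k + m) ξ‖ +
          (l + 1 : ℕ) * ‖splineFourier s l (k + m + 1) ξ‖) := by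
      gcongr; simpa using h
    rw [show k + 1 + m = k + m + 1 by ring] at h4 ⊢
    rw [pow_succ, mul_assoc, Finset.sum_range_succ]
    push_cast at h3
    have hl : (0 : ℝ) ≤ l + 1 := by positivity
    nlinarith [mul_le_mul_of_nonneg_left h4 hl]

lemma pow_mul_norm_splineFourier_le {s : ℕ} (hs : Even s) (ξ : ℝ) (l k : ℕ)
    (u : ℕ → ℝ) (hu : ∀ j, j < s → |ξ| ^ j * ‖splineFourier s (l - 1) j ξ‖ ≤ u j)
    (hk : k < s) :
    |ξ| ^ (k + 1) * ‖splineFourier s l k ξ‖ ≤ 2 * s + l * ∑ j ∈ Finset.range (k + 1), u j := by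
  induction k with
  | zero =>
    have h := abs_mul_norm_splineFourier_zero_le hs hk l ξ
    have h2 := hu 0 hk
    rw [pow_zero, one_mul] at h2
    rw [zero_add, pow_one, Finset.sum_range_one]
    refine h.trans ?_
    gcongr
  | succ k ih =>
    have h := abs_mul_norm_splineFourier_succ_le hs (k := k) (by omega) l ξ
    have h2 := ih (by omega)
    have h4 := hu (k + 1) (by omega)
    have h3 : |ξ| ^ (k + 1) * (|ξ| * ‖splineFourier s l (k + 1) ξ‖) ≤
        |ξ| ^ (k + 1) * (‖splineFourier s l k ξ‖ + l * ‖splineFourier s (l - 1) (k + 1) ξ‖) := by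
      gcongr
    rw [pow_succ, mul_assoc, Finset.sum_range_succ]
    have hl : (0 : ℝ) ≤ l := by positivity
    nlinarith [mul_le_mul_of_nonneg_left h4 hl]

/-- Constants in the decay estimate of the Fourier transform of `x ^ l * fspline s (s - 1) x`. -/
noncomputable def decayConst (s : ℕ) : ℕ → ℝ
  | 0 => 2 * s
  | 1 => 4 * s
  | 2 => 7.26 * s
  | _ => 12.37 * s

lemma sum_range_cast (k : ℕ) : ∑ j ∈ Finset.range k, (j : ℝ) = k * (k - 1) / 2 := by
  induction k with
  | zero => simp
  | succ k ih => rw [Finset.sum_range_succ, ih]; push_cast; ring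

lemma sum_range_cast_mul_pred (k : ℕ) :
    ∑ j ∈ Finset.range k, (j : ℝ) * (j - 1) = k * (k - 1) * (k - 2) / 3 := by
  induction k with
  | zero => simp
  | succ k ih => rw [Finset.sum_range_succ, ih]; push_cast; ring

lemma pow_mul_norm_splineFourier_pred_le {s : ℕ} (hs : Even s) (hs6 : 6 ≤ s) (ξ : ℝ) {l : ℕ}
    (hl : l ≤ 3) : |ξ| ^ s * ‖splineFourier s l (s - 1) ξ‖ ≤ decayConst s l := by
  have hsR : (6 : ℝ) ≤ s := by exact_mod_cast hs6
  set t := 1.63 / (s : ℝ) with ht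
  set w := 1.74 / (s : ℝ) ^ 2 with hw
  have hts : t * s = 1.63 := by rw [ht]; field_simp
  have hws : w * s ^ 2 = 1.74 := by rw [hw]; field_simp
  have ht0 : 0 ≤ t := by positivity
  have hw0 : 0 ≤ w := by positivity
  have b0 := fun l ↦ norm_splineFourier_le (s := s) (k := 0) (fun x _ => abs_fspline_zero_le s x) l ξ
  have b1 := fun l ↦ norm_splineFourier_le (s := s) (k := 1) (b := t) (fun x hx =>
    (abs_fspline_one_le hs (by omega) hx).trans (tan_node_angle_half_le hs6)) l ξ
  have b2 := fun l ↦ norm_splineFourier_le (s := s) (k := 2) (b := w)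
    (fun x hx => abs_fspline_two_le hs hs6 hx) l ξ
  have e00 : ∀ j, j < s → |ξ| ^ j * ‖splineFourier s 0 j ξ‖ ≤ 2 := fun j hj => by
    simpa using pow_mul_norm_splineFourier_zero_le hs ξ 2 0 j (by simpa using b0 0) hj
  have e01 : ∀ j, j + 1 < s → |ξ| ^ j * ‖splineFourier s 0 (j + 1) ξ‖ ≤ t * 2 := fun j hj =>
    pow_mul_norm_splineFourier_zero_le hs ξ (t * 2) 1 j (by simpa using b1 0) hj
  have e02 : ∀ j, j + 2 < s → |ξ| ^ j * ‖splineFourier s 0 (j + 2) ξ‖ ≤ w * 2 := fun j hj =>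
    pow_mul_norm_splineFourier_zero_le hs ξ (w * 2) 2 j (by simpa using b2 0) hj
  have e10 : ∀ j, j < s → |ξ| ^ j * ‖splineFourier s 1 j ξ‖ ≤ 1 + j * (t * 2) := fun j hj => by
    have := pow_mul_norm_splineFourier_succ_le hs ξ 1 0 0 j (fun _ => t * 2)
      ((b0 1).trans (by norm_num)) (fun j hj => e01 j hj) hj
    simpa using this
  have e11 : ∀ j, j + 1 < s → |ξ| ^ j * ‖splineFourier s 1 (j + 1) ξ‖ ≤ t + j * (w * 2) :=
    fun j hj => by
    have := pow_mul_norm_splineFourier_succ_le hs ξ t 0 1 j (fun _ => w * 2)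
      ((b1 1).trans (by norm_num)) (fun j hj => e02 j hj) hj
    simpa using this
  have e20 : ∀ j, j < s → |ξ| ^ j * ‖splineFourier s 2 j ξ‖ ≤
      2 / 3 + 2 * (j * t) + j * (j - 1) * (w * 2) := fun j hj => by
    have := pow_mul_norm_splineFourier_succ_le hs ξ (2 / 3) 1 0 j (fun j => t + j * (w * 2))
      ((b0 2).trans (by norm_num)) (fun j hj => e11 j hj) hj
    rw [Finset.sum_add_distrib, ← Finset.sum_mul, sum_range_cast] at this
    simp only [add_zero, Nat.cast_one, Finset.sum_const, Finset.card_range, nsmul_eq_mul] at this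
    refine this.trans (le_of_eq ?_)
    ring
  have hsub : s - 1 + 1 = s := by omega
  have hlt : s - 1 < s := by omega
  interval_cases l
  · have := pow_mul_norm_splineFourier_le hs ξ 0 (s - 1) (fun _ => 2) e00 hlt
    rw [hsub] at this
    simpa [decayConst] using this
  · have := pow_mul_norm_splineFourier_le hs ξ 1 (s - 1) (fun _ => 2) e00 hlt
    rw [hsub] at this
    simp at this
    simp only [decayConst]
    linarith
  · have := pow_mul_norm_splineFourier_le hs ξ 2 (s - 1) _ e10 hlt
    rw [hsub, Finset.sum_add_distrib, ← Finset.sum_mul, sum_range_cast] at this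
    simp at this
    simp only [decayConst]
    nlinarith
  · have := pow_mul_norm_splineFourier_le hs ξ 3 (s - 1) _ e20 hlt
    rw [hsub, Finset.sum_add_distrib, Finset.sum_add_distrib, ← Finset.sum_mul,
      ← Finset.mul_sum, ← Finset.sum_mul, sum_range_cast, sum_range_cast_mul_pred] at this
    simp at this
    simp only [decayConst]
    nlinarith

/-- The spline `fspline s (s - 1)`, cut off outside `[-1, 1]`. -/
noncomputable def splineCut (s : ℕ) (x : ℝ) : ℝ := fspline s (s - 1) (max (-1) (min x 1))

lemma continuous_splineCut {s : ℕ} (hs : 2 ≤ s) : Continuous (splineCut s) := by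
  have h := continuous_fspline_succ s (s - 2)
  rw [show s - 2 + 1 = s - 1 by omega] at h
  exact h.comp (by fun_prop)

lemma splineCut_of_mem {s : ℕ} {x : ℝ} (hx : x ∈ Set.Icc (-1 : ℝ) 1) :
    splineCut s x = fspline s (s - 1) x := by
  rw [splineCut, min_eq_left hx.2, max_eq_right hx.1]

lemma splineCut_of_one_le_abs {s : ℕ} (hs : Even s) (hs2 : 2 ≤ s) {x : ℝ} (hx : 1 ≤ |x|) :
    splineCut s x = 0 := by
  have e : s - 1 = s - 2 + 1 := by omega
  rw [splineCut]
  rcases le_abs'.mp hx with h | h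
  · rw [min_eq_left (by linarith), max_eq_left h, e, fspline_succ_neg_one]
  · rw [min_eq_right h, max_eq_right (by norm_num), e, fspline_succ_one hs (by omega)]

lemma integral_splineCut_mul {s : ℕ} (hs : Even s) (hs2 : 2 ≤ s) (l : ℕ) (ξ : ℝ) :
    ∫ x : ℝ, (splineCut s x : ℂ) * ((x : ℂ) ^ l * Complex.exp (x * ξ * Complex.I)) =
      splineFourier s l (s - 1) ξ := by
  rw [splineFourier, intervalIntegral.integral_of_le (by norm_num),
    ← integral_indicator measurableSet_Ioc]
  congr 1
  funext x
  by_cases hx : x ∈ Set.Ioc (-1 : ℝ) 1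
  · rw [Set.indicator_of_mem hx, splineCut_of_mem ⟨hx.1.le, hx.2⟩, Complex.real_smul]
  · rw [Set.indicator_of_notMem hx, splineCut_of_one_le_abs hs hs2]
    · simp
    · rw [Set.mem_Ioc, not_and_or, not_lt, not_le] at hx
      exact le_abs'.mpr (hx.imp id le_of_lt)

/-- Poisson summation for the sampled spline. -/
lemma sum_splineCut_eq_tsum {s : ℕ} (hs : Even s) (hs2 : 2 ≤ s) (l N : ℕ) (t : ℝ)
    (hsum : Summable fun n : ℤ => splineFourier s l (s - 1) (-((N + 1) * (t + 2 * π * n)))) :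
    ∑ k ∈ Finset.Icc (-(N : ℤ)) N, (fspline s (s - 1) (k / (N + 1)) : ℂ) *
        (((k : ℂ) / (N + 1)) ^ l * Complex.exp (-(k * t * Complex.I))) =
      (N + 1) * ∑' n : ℤ, splineFourier s l (s - 1) (-((N + 1) * (t + 2 * π * n))) := by
  set f : ℝ → ℂ := fun u => (splineCut s (u / (N + 1)) : ℂ) *
    (((u : ℂ) / (N + 1)) ^ l * Complex.exp (-(u * t * Complex.I))) with hf
  have hM : (0 : ℝ) < N + 1 := by positivity
  have hMC : (N + 1 : ℂ) ≠ 0 := by exact_mod_cast hM.ne'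
  have hfc : Continuous f := by
    have h1 := continuous_splineCut (s := s) hs2
    have h2 : Continuous fun u : ℝ => (splineCut s (u / (N + 1)) : ℂ) :=
      Complex.continuous_ofReal.comp (h1.comp (by fun_prop))
    exact h2.mul (by fun_prop)
  have hf0 : ∀ u : ℝ, (N : ℝ) + 1 ≤ |u| → f u = 0 := by
    intro u hu
    have : 1 ≤ |u / (N + 1)| := by
      rw [abs_div, abs_of_pos hM, le_div_iff₀ hM, one_mul]; exact hu
    simp only [hf, splineCut_of_one_le_abs hs hs2 this, Complex.ofReal_zero, zero_mul]
  have hfour : ∀ n : ℤ, FourierTransform.fourier f (n : ℝ) =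
      (N + 1) * splineFourier s l (s - 1) (-((N + 1) * (t + 2 * π * n))) := by
    intro n
    rw [Real.fourier_real_eq_integral_exp_smul, ← integral_splineCut_mul hs hs2]
    have h := Measure.integral_comp_div (fun x : ℝ => (splineCut s x : ℂ) * ((x : ℂ) ^ l *
      Complex.exp (x * (-((N + 1) * (t + 2 * π * n)) : ℝ) * Complex.I))) ((N : ℝ) + 1)
    rw [abs_of_pos hM, Complex.real_smul] at h
    push_cast at h ⊢
    rw [← h]
    congr 1
    funext u
    simp only [hf, smul_eq_mul]
    rw [mul_left_comm, mul_left_comm (Complex.exp _), ← Complex.exp_add]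
    congr 3
    field_simp
    ring
  have hO : f =O[Filter.cocompact ℝ] fun x : ℝ => |x| ^ (-(2 : ℝ)) := by
    apply Filter.EventuallyEq.trans_isBigO (f₂ := fun _ => (0 : ℂ)) _ (Asymptotics.isBigO_zero _ _)
    have := (tendsto_norm_cocompact_atTop (E := ℝ)).eventually_ge_atTop ((N : ℝ) + 1)
    filter_upwards [this] with u hu using hf0 u hu
  have hP := Real.tsum_eq_tsum_fourier_of_rpow_decay_of_summable hfc (b := 2) (by norm_num) hO
    (by simp_rw [hfour]; exact hsum.mul_left _) 0
  simp only [hfour, zero_add, QuotientAddGroup.mk_zero, fourier_eval_zero, mul_one] at hP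
  rw [tsum_mul_left] at hP
  rw [← hP, tsum_eq_sum (s := Finset.Icc (-(N : ℤ)) N)]
  · apply Finset.sum_congr rfl
    intro k hk
    rw [Finset.mem_Icc] at hk
    simp only [hf]
    rw [splineCut_of_mem]
    · push_cast; rfl
    · have h1 : -(N : ℝ) ≤ k := by exact_mod_cast hk.1
      have h2 : (k : ℝ) ≤ N := by exact_mod_cast hk.2
      constructor
      · rw [le_div_iff₀ hM]; linarith
      · rw [div_le_iff₀ hM]; linarith
  · intro k hk
    apply hf0
    have : (N : ℤ) + 1 ≤ |k| := by
      rw [Finset.mem_Icc, ← abs_le] at hk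
      omega
    exact_mod_cast this

lemma norm_tsum_int_le {a : ℤ → ℂ} {u v : ℕ → ℝ} {U V : ℝ} (hu : HasSum u U) (hv : HasSum v V)
    (h1 : ∀ n : ℕ, ‖a n‖ ≤ u n) (h2 : ∀ n : ℕ, ‖a (-(n + 1 : ℤ))‖ ≤ v n) :
    Summable a ∧ ‖∑' n, a n‖ ≤ U + V := by
  have s1 : Summable fun n : ℕ => ‖a n‖ := Summable.of_nonneg_of_le (fun _ => norm_nonneg _) h1 hu.summable
  have s2 : Summable fun n : ℕ => ‖a (-(n + 1 : ℤ))‖ :=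
    Summable.of_nonneg_of_le (fun _ => norm_nonneg _) h2 hv.summable
  have h := HasSum.of_nat_of_neg_add_one (f := a) s1.of_norm.hasSum s2.of_norm.hasSum
  refine ⟨h.summable, ?_⟩
  rw [h.tsum_eq]
  refine (norm_add_le _ _).trans (add_le_add ?_ ?_)
  · exact tsum_of_norm_bounded hu h1
  · exact tsum_of_norm_bounded hv h2

lemma decayConst_nonneg (s l : ℕ) : 0 ≤ decayConst s l := by
  unfold decayConst; split <;> positivity

lemma norm_splineFourier_le_of_le {s : ℕ} (hs : Even s) (hs6 : 6 ≤ s) {ξ b : ℝ} {l : ℕ}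
    (hl : l ≤ 3) (hb : 0 < b) (hξ : b ≤ |ξ|) :
    ‖splineFourier s l (s - 1) ξ‖ ≤ decayConst s l / b ^ s := by
  rw [le_div_iff₀ (by positivity), mul_comm]
  refine le_trans ?_ (pow_mul_norm_splineFourier_pred_le hs hs6 ξ hl)
  gcongr

lemma exists_hasSum_odd_pow {s : ℕ} (hs6 : 6 ≤ s) :
    ∃ u : ℕ → ℝ, ∃ U ≤ 1.008, HasSum u U ∧ ∀ j : ℕ, 1 / (2 * (j : ℝ) + 1) ^ s ≤ u j := by
  have h0 : HasSum (fun n : ℕ => 1 / ((n : ℝ) + 1) ^ 2) (π ^ 2 / 6) := by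
    have := (hasSum_nat_add_iff' (f := fun n : ℕ => 1 / (n : ℝ) ^ 2) 1).mpr hasSum_zeta_two
    simpa using this
  refine ⟨fun j => 1 / 81 * (1 / ((j : ℝ) + 1) ^ 2) + if j = 0 then 80 / 81 else 0,
    1 / 81 * (π ^ 2 / 6) + 80 / 81, ?_, (h0.mul_left _).add (hasSum_ite_eq 0 _), ?_⟩
  · have h1 := Real.pi_lt_d4
    have h2 := Real.pi_pos
    nlinarith
  · intro j
    rcases Nat.eq_zero_or_pos j with rfl | hj
    · norm_num
    · have hj1 : (1 : ℝ) ≤ j := by exact_mod_cast hj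
      simp only [if_neg (show ¬j = 0 by omega), add_zero]
      rw [one_div_mul_one_div_rev]
      apply one_div_le_one_div_of_le (by positivity)
      calc ((j : ℝ) + 1) ^ 2 * 81 ≤ (2 * (j : ℝ) + 1) ^ 2 * (2 * (j : ℝ) + 1) ^ 4 := by
            gcongr
            · linarith
            · calc (81 : ℝ) = 3 ^ 4 := by norm_num
                _ ≤ _ := by gcongr; linarith
        _ = (2 * (j : ℝ) + 1) ^ 6 := by ring
        _ ≤ _ := pow_le_pow_right₀ (by linarith) hs6

lemma norm_sum_fspline_le {s : ℕ} (hs : Even s) (hs6 : 6 ≤ s) {l : ℕ} (hl : l ≤ 3) (N : ℕ) {t : ℝ}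
    (ht : 0 < t) (htpi : t ≤ π) :
    ‖∑ k ∈ Finset.Icc (-(N : ℤ)) N, (fspline s (s - 1) (k / (N + 1)) : ℂ) *
        (((k : ℂ) / (N + 1)) ^ l * Complex.exp (-(k * t * Complex.I)))‖ ≤
      (N + 1) * (2 * 1.008 * (decayConst s l / ((N + 1) * t) ^ s)) := by
  obtain ⟨u, U, hU, hu, huj⟩ := exists_hasSum_odd_pow hs6
  have hM : (0 : ℝ) < N + 1 := by positivity
  have hD := decayConst_nonneg s l
  set D := decayConst s l / ((N + 1) * t) ^ s with hDdef
  have hD0 : 0 ≤ D := by positivity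
  have hb : ∀ (j : ℕ) (r : ℝ), (2 * j + 1) * t ≤ |r| →
      ‖splineFourier s l (s - 1) (-((N + 1) * r))‖ ≤ D * u j := by
    intro j r hr
    refine (norm_splineFourier_le_of_le hs hs6 hl (b := (2 * j + 1) * ((N + 1) * t))
      (by positivity) ?_).trans ?_
    · rw [abs_neg, abs_mul, abs_of_pos hM]
      nlinarith
    · rw [mul_pow, mul_comm, ← div_div]
      refine le_trans (le_of_eq ?_) (mul_le_mul_of_nonneg_left (huj j) hD0)
      rw [hDdef]
      ring
  have key := norm_tsum_int_le
    (a := fun n : ℤ => splineFourier s l (s - 1) (-((N + 1) * (t + 2 * π * n))))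
    (hu.mul_left D) (hu.mul_left D) (fun j => hb j _ ?_) (fun j => hb j _ ?_)
  · rw [sum_splineCut_eq_tsum hs (by omega) l N t key.1, norm_mul]
    have : ‖(N + 1 : ℂ)‖ = N + 1 := by
      rw [← Nat.cast_succ, Complex.norm_natCast]; push_cast; rfl
    rw [this]
    refine mul_le_mul_of_nonneg_left (key.2.trans ?_) hM.le
    nlinarith
  · refine le_trans ?_ (le_abs_self _)
    push_cast
    have : 0 ≤ (j : ℝ) := by positivity
    nlinarith
  · refine le_trans ?_ (neg_le_abs _)
    push_cast
    have : 0 ≤ (j : ℝ) := by positivity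
    nlinarith

lemma gtilde_div (s N : ℕ) (k : ℤ) :
    gtilde s ((k : ℝ) / (2 * ((N : ℝ) + 1))) = fspline s (s - 1) (k / (N + 1)) := by
  rw [gtilde]
  congr 1
  field_simp

lemma splineFourier_zero_zero (s k : ℕ) :
    splineFourier s 0 k 0 = ((∫ x in (-1 : ℝ)..1, fspline s k x : ℝ) : ℂ) := by
  simp [splineFourier, intervalIntegral.integral_ofReal]

lemma abs_gnorm_sub_le {s : ℕ} (hs : Even s) (hs6 : 6 ≤ s) (N : ℕ) :
    |gnorm s N - (N + 1) * ∫ x in (-1 : ℝ)..1, fspline s (s - 1) x| ≤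
      (N + 1) * (4 * (2 * s / ((N + 1) * (2 * π)) ^ s)) := by
  have hM : (0 : ℝ) < N + 1 := by positivity
  set D := 2 * s / ((N + 1) * (2 * π)) ^ s with hDdef
  have hD0 : 0 ≤ D := by positivity
  set a : ℤ → ℂ := fun n : ℤ => splineFourier s 0 (s - 1) (-((N + 1) * (0 + 2 * π * n))) with ha
  have h1 : HasSum (fun n : ℕ => 1 / ((n : ℝ) + 1) ^ 2) (π ^ 2 / 6) := by
    have := (hasSum_nat_add_iff' (f := fun n : ℕ => 1 / (n : ℝ) ^ 2) 1).mpr hasSum_zeta_two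
    simpa using this
  have hb : ∀ (j : ℝ) (n : ℤ), 1 ≤ j → j ≤ |(n : ℝ)| → ‖a n‖ ≤ D * (1 / j ^ 2) := by
    intro j n hj hn
    refine (norm_splineFourier_le_of_le hs hs6 (by norm_num) (b := ((N + 1) * (2 * π)) * j)
      (by positivity) ?_).trans ?_
    · rw [zero_add, abs_neg, abs_mul, abs_mul, abs_of_pos hM, abs_of_pos (by positivity : 0 < 2 * π),
        mul_assoc]
      gcongr
    · rw [mul_pow, ← div_div, hDdef, decayConst, div_eq_mul_one_div _ (j ^ s)]
      gcongr
      omega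
  have key := norm_tsum_int_le (a := fun n => if n = 0 then 0 else a n)
    (hasSum_zeta_two.mul_left D) (h1.mul_left D) ?_ ?_
  · have hsum : Summable a := by
      refine (summable_congr_cofinite ?_).mp key.1
      filter_upwards [(Set.finite_singleton (0 : ℤ)).compl_mem_cofinite] with n hn
      rw [if_neg (show ¬n = 0 from hn)]
    have h := sum_splineCut_eq_tsum hs (by omega) 0 N 0 hsum
    have hg : ∑ k ∈ Finset.Icc (-(N : ℤ)) N, (fspline s (s - 1) (k / (N + 1)) : ℂ) *
        (((k : ℂ) / (N + 1)) ^ 0 * Complex.exp (-(k * (0 : ℝ) * Complex.I))) = (gnorm s N : ℂ) := by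
      rw [gnorm, Complex.ofReal_sum]
      simp_rw [gtilde_div]
      simp
    rw [hg] at h
    change (gnorm s N : ℂ) = (N + 1) * ∑' n, a n at h
    rw [hsum.tsum_eq_add_tsum_ite 0] at h
    have ha0 : a 0 = ((∫ x in (-1 : ℝ)..1, fspline s (s - 1) x : ℝ) : ℂ) := by
      rw [← splineFourier_zero_zero]
      simp [ha]
    rw [ha0] at h
    have h3 : ((gnorm s N - (N + 1) * ∫ x in (-1 : ℝ)..1, fspline s (s - 1) x : ℝ) : ℂ) =
        ((N + 1 : ℝ) : ℂ) * ∑' n : ℤ, if n = 0 then 0 else a n := by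
      push_cast
      linear_combination h
    rw [← Real.norm_eq_abs, ← Complex.norm_real, h3, norm_mul, Complex.norm_real, Real.norm_eq_abs,
      abs_of_pos hM]
    refine mul_le_mul_of_nonneg_left (key.2.trans ?_) hM.le
    have h4 := Real.pi_lt_d2
    have h5 : π ^ 2 / 6 ≤ 2 := by nlinarith [Real.pi_pos]
    nlinarith
  · intro n
    rcases Nat.eq_zero_or_pos n with rfl | hn
    · simp
    · simp only [Nat.cast_eq_zero, if_neg hn.ne']
      exact hb n n (by exact_mod_cast hn) (by simp)
  · intro n
    rw [if_neg (by omega)]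
    refine hb (n + 1) _ (by linarith [n.cast_nonneg (α := ℝ)]) ?_
    push_cast
    rw [abs_neg, abs_of_nonneg (by positivity)]

lemma gnorm_ge {s : ℕ} (hs : Even s) (hs6 : 6 ≤ s) {N : ℕ} (hN : 2 * s ≤ N) :
    (N + 1) * (0.99 * (2 / (2 ^ (s - 1) * ((s - 1).factorial : ℝ)))) ≤ gnorm s N := by
  have h := (abs_le.mp (abs_gnorm_sub_le hs hs6 N)).1
  rw [integral_fspline_pred hs (by omega)] at h
  have hM : (0 : ℝ) < N + 1 := by positivity
  set I := 2 / (2 ^ (s - 1) * ((s - 1).factorial : ℝ)) with hI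
  have hsR : (6 : ℝ) ≤ s := by exact_mod_cast hs6
  have hNR : 2 * (s : ℝ) ≤ N := by exact_mod_cast hN
  have hfac : ((s - 1).factorial : ℝ) * s = s.factorial := by
    rw [mul_comm]; exact_mod_cast Nat.mul_factorial_pred (by omega)
  have hle : (s.factorial : ℝ) ≤ s ^ s := by exact_mod_cast Nat.factorial_le_pow s
  have h2 : (2 : ℝ) ^ s = 2 * 2 ^ (s - 1) := by
    rw [← pow_succ']; congr 1; omega
  have h4 : 4 * (2 * s / ((N + 1) * (2 * π)) ^ s) ≤ 0.01 * I := by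
    rw [hI, ← mul_div_assoc, ← mul_div_assoc, div_le_div_iff₀ (by positivity) (by positivity)]
    have h6 : (2 * s) ^ s * (6 : ℝ) ^ s ≤ ((N + 1) * (2 * π)) ^ s := by
      rw [← mul_pow]
      gcongr
      · linarith
      · linarith [Real.pi_gt_three]
    have h7 : (6 : ℝ) ^ 6 ≤ 6 ^ s := pow_le_pow_right₀ (by norm_num) hs6
    have h8 : 4 * (2 * (s : ℝ)) * (2 ^ (s - 1) * ((s - 1).factorial : ℝ)) =
        4 * (2 ^ s * s.factorial) := by rw [← hfac, h2]; ring
    rw [h8]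
    have h9 : (2 : ℝ) ^ s * s.factorial ≤ (2 * s) ^ s := by rw [mul_pow]; gcongr
    have h10 : (0 : ℝ) < (2 * s) ^ s := by positivity
    nlinarith
  nlinarith

/-- The `l`-th derivative of the trigonometric kernel. -/
noncomputable def sigmaDeriv (s N l : ℕ) (t : ℝ) : ℝ :=
  ((1 / (gnorm s N : ℂ)) * ∑ k ∈ Finset.Icc (-(N : ℤ)) (N : ℤ),
    (gtilde s ((k : ℝ) / (2 * ((N : ℝ) + 1))) : ℂ) *
      ((k * Complex.I) ^ l * Complex.exp ((k : ℂ) * t * Complex.I))).re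

lemma sigmaDeriv_zero (s N : ℕ) (t : ℝ) : sigmaDeriv s N 0 t = sigmaT s N t := by
  simp [sigmaDeriv, sigmaT]

lemma hasDerivAt_sigmaDeriv (s N l : ℕ) (t : ℝ) :
    HasDerivAt (sigmaDeriv s N l) (sigmaDeriv s N (l + 1) t) t := by
  have h : HasDerivAt (fun z : ℂ => (1 / (gnorm s N : ℂ)) * ∑ k ∈ Finset.Icc (-(N : ℤ)) (N : ℤ),
      (gtilde s ((k : ℝ) / (2 * ((N : ℝ) + 1))) : ℂ) *
      ((k * Complex.I) ^ l * Complex.exp ((k : ℂ) * z * Complex.I)))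
      ((1 / (gnorm s N : ℂ)) * ∑ k ∈ Finset.Icc (-(N : ℤ)) (N : ℤ),
      (gtilde s ((k : ℝ) / (2 * ((N : ℝ) + 1))) : ℂ) *
      ((k * Complex.I) ^ (l + 1) * Complex.exp ((k : ℂ) * t * Complex.I))) (t : ℂ) := by
    refine HasDerivAt.const_mul _ (HasDerivAt.fun_sum fun k _ => HasDerivAt.const_mul _ ?_)
    have := ((((hasDerivAt_id (t : ℂ)).const_mul (k : ℂ)).mul_const Complex.I).cexp).const_mul
      ((k * Complex.I) ^ l)
    refine this.congr_deriv ?_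
    simp only [id, pow_succ]
    ring
  exact h.real_of_complex

lemma abs_sigmaDeriv_le {s : ℕ} (hs : Even s) (hs6 : 6 ≤ s) {l N : ℕ} (hl : l ≤ 3)
    (hN : 2 * s ≤ N) {t : ℝ} (ht : 0 < t) (htpi : t ≤ π) :
    |sigmaDeriv s N l t| ≤ (1.02 * (s - 1).factorial * 2 ^ (s - 1)) * decayConst s l *
      ((N + 1) ^ l / ((N + 1) * t) ^ s) := by
  have hM : (0 : ℝ) < N + 1 := by positivity
  have hMC : (N + 1 : ℂ) ≠ 0 := by exact_mod_cast hM.ne'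
  have hg := gnorm_ge hs hs6 hN
  have hg0 : 0 < gnorm s N := lt_of_lt_of_le (by positivity) hg
  set S := ∑ k ∈ Finset.Icc (-(N : ℤ)) N, (fspline s (s - 1) (k / (N + 1)) : ℂ) *
        (((k : ℂ) / (N + 1)) ^ l * Complex.exp (-(k * t * Complex.I))) with hS
  have hSb := norm_sum_fspline_le hs hs6 hl N ht htpi
  rw [← hS] at hSb
  have hsum : ∑ k ∈ Finset.Icc (-(N : ℤ)) (N : ℤ),
      (gtilde s ((k : ℝ) / (2 * ((N : ℝ) + 1))) : ℂ) *
      ((k * Complex.I) ^ l * Complex.exp ((k : ℂ) * t * Complex.I)) =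
      (Complex.I ^ l * (N + 1) ^ l) * (starRingEnd ℂ) S := by
    rw [hS, map_sum, Finset.mul_sum]
    apply Finset.sum_congr rfl
    intro k _
    rw [gtilde_div, map_mul, map_mul, map_pow, ← Complex.exp_conj]
    simp only [map_div₀, map_neg, map_mul, Complex.conj_ofReal, Complex.conj_I, map_add, map_one,
      Complex.conj_natCast, map_intCast, div_pow, mul_pow]
    rw [mul_neg, neg_neg]
    field_simp
  rw [sigmaDeriv, hsum]
  refine (Complex.abs_re_le_norm _).trans ?_
  have hnM : ‖(N + 1 : ℂ)‖ = N + 1 := by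
    rw [← Nat.cast_succ, Complex.norm_natCast]; push_cast; rfl
  rw [norm_mul, norm_mul, norm_mul, norm_pow, norm_pow, Complex.norm_I, one_pow, one_mul,
    RCLike.norm_conj, hnM, norm_div, norm_one, Complex.norm_real, Real.norm_of_nonneg hg0.le]
  have hV := decayConst_nonneg s l
  have e : (1.02 * ((s - 1).factorial : ℝ) * 2 ^ (s - 1)) * decayConst s l *
      (((N : ℝ) + 1) ^ l / ((N + 1) * t) ^ s) = (((N : ℝ) + 1) ^ l *
      ((N + 1) * (2 * 1.008 * (decayConst s l / ((N + 1) * t) ^ s)))) *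
      ((1.02 / (2 * 1.008)) * ((s - 1).factorial * 2 ^ (s - 1)) / (N + 1)) := by
    field_simp
  rw [e, mul_comm (1 / _)]
  refine mul_le_mul (by gcongr) ?_ (by positivity) (by positivity)
  rw [div_le_div_iff₀ hg0 hM, one_mul]
  have hfp : 0 < ((s - 1).factorial * 2 ^ (s - 1) : ℝ) := by positivity
  have h5 := mul_le_mul_of_nonneg_left hg
    (by positivity : (0 : ℝ) ≤ 1.02 / (2 * 1.008) * ((s - 1).factorial * 2 ^ (s - 1)))
  refine le_trans ?_ h5
  have : 1.02 / (2 * 1.008) * (((s - 1).factorial : ℝ) * 2 ^ (s - 1)) *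
      ((N + 1) * (0.99 * (2 / (2 ^ (s - 1) * ((s - 1).factorial : ℝ))))) =
      (N + 1) * (1.02 / 1.008 * 0.99) := by field_simp
  rw [this]
  nlinarith

lemma IsSO3.mul_transpose_self {x : Mat3} (hx : IsSO3 x) : x * x.transpose = 1 :=
  mul_eq_one_comm.mp hx.1

lemma IsSO3.inv_eq {x : Mat3} (hx : IsSO3 x) : x⁻¹ = x.transpose :=
  Matrix.inv_eq_left_inv hx.1

lemma IsSO3.transpose {x : Mat3} (hx : IsSO3 x) : IsSO3 x.transpose :=
  ⟨by rw [Matrix.transpose_transpose]; exact hx.mul_transpose_self,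
    by rw [Matrix.det_transpose]; exact hx.2⟩

lemma IsSO3.mul {x y : Mat3} (hx : IsSO3 x) (hy : IsSO3 y) : IsSO3 (x * y) := by
  refine ⟨?_, by rw [Matrix.det_mul, hx.2, hy.2, mul_one]⟩
  rw [Matrix.transpose_mul, Matrix.mul_assoc, ← Matrix.mul_assoc x.transpose, hx.1, Matrix.one_mul,
    hy.1]

lemma transpose_Lgen (i : Fin 3) : (Lgen i).transpose = -Lgen i := by
  ext a b
  fin_cases i <;> fin_cases a <;> fin_cases b <;> simp [Lgen]

lemma transpose_exp_Lgen (t : ℝ) (i : Fin 3) :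
    (NormedSpace.exp (t • Lgen i)).transpose = NormedSpace.exp ((-t) • Lgen i) := by
  rw [← Matrix.exp_transpose, Matrix.transpose_smul, transpose_Lgen, smul_neg, neg_smul]

lemma isSO3_exp_Lgen (t : ℝ) (i : Fin 3) : IsSO3 (NormedSpace.exp (t • Lgen i)) := by
  have h : ∀ t : ℝ, (NormedSpace.exp (t • Lgen i)).transpose * NormedSpace.exp (t • Lgen i) = 1 := by
    intro t
    rw [transpose_exp_Lgen, ← Matrix.exp_add_of_commute]
    · rw [neg_smul, neg_add_cancel, NormedSpace.exp_zero]
    · exact ((Commute.refl _).smul_left _).smul_right _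
  refine ⟨h t, ?_⟩
  have h2 : NormedSpace.exp (t • Lgen i) =
      NormedSpace.exp ((t / 2) • Lgen i) * NormedSpace.exp ((t / 2) • Lgen i) := by
    rw [← Matrix.exp_add_of_commute _ _ (Commute.refl _), ← add_smul, add_halves]
  have h3 := congrArg Matrix.det (h (t / 2))
  rw [Matrix.det_mul, Matrix.det_transpose, Matrix.det_one] at h3
  rw [h2, Matrix.det_mul, h3]

section
attribute [local instance] Matrix.linftyOpNormedRing Matrix.linftyOpNormedAlgebra

lemma hasDerivAt_trace_mul_exp (z L A : Mat3) :
    HasDerivAt (fun t : ℝ => Matrix.trace (z * NormedSpace.exp (t • L) * A))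
      (Matrix.trace (z * (L * A))) 0 := by
  have h := hasDerivAt_exp_smul_const (𝕂 := ℝ) L 0
  rw [zero_smul, NormedSpace.exp_zero, one_mul] at h
  have h2 := (h.const_mul z).mul_const A
  have h3 := (LinearMap.toContinuousLinearMap (Matrix.traceLinearMap (Fin 3) ℝ ℝ)).hasFDerivAt.comp_hasDerivAt
    (0 : ℝ) h2
  rw [Matrix.mul_assoc] at h3
  exact h3

end

/-- Half of the trace of `z * A`. -/
noncomputable def halfTrace (z A : Mat3) : ℝ := Matrix.trace (z * A) / 2

lemma hasDerivAt_halfTrace (z A : Mat3) (i : Fin 3) :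
    HasDerivAt (fun t : ℝ => halfTrace (z * NormedSpace.exp (t • Lgen i)) A)
      (halfTrace z (Lgen i * A)) 0 :=
  (hasDerivAt_trace_mul_exp z (Lgen i) A).div_const 2

lemma hasDerivAt_eval_halfTrace (q : ℝ[X]) (z : Mat3) (i : Fin 3) :
    HasDerivAt (fun t : ℝ => q.eval (halfTrace (z * NormedSpace.exp (t • Lgen i)) 1 - 1 / 2))
      (q.derivative.eval (halfTrace z 1 - 1 / 2) * halfTrace z (Lgen i)) 0 := by
  have h1 := (hasDerivAt_halfTrace z 1 i).sub_const (1 / 2)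
  rw [mul_one] at h1
  have h2 := q.hasDerivAt (halfTrace (z * NormedSpace.exp ((0 : ℝ) • Lgen i)) 1 - 1 / 2)
  have h3 := h2.comp (0 : ℝ) h1
  rw [zero_smul, NormedSpace.exp_zero, mul_one] at h3
  exact h3

lemma Xx_eq_of_eq {f : Mat3 → Mat3 → ℝ} {G G' : Mat3 → ℝ} {i : Fin 3}
    (hf : ∀ x y, IsSO3 x → IsSO3 y → f x y = G (y.transpose * x))
    (hG : ∀ z, HasDerivAt (fun t : ℝ => G (z * NormedSpace.exp (t • Lgen i))) (G' z) 0)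
    (x y : Mat3) (hx : IsSO3 x) (hy : IsSO3 y) : Xx i f x y = G' (y.transpose * x) := by
  rw [← (hG (y.transpose * x)).deriv, Xx]
  congr 1
  funext t
  rw [hf _ _ (hx.mul (isSO3_exp_Lgen t i)) hy, Matrix.mul_assoc]

/-- Polynomial whose composition with the cosine is the trigonometric kernel. -/
noncomputable def sigmaPoly (s N : ℕ) : ℝ[X] :=
  C (1 / gnorm s N) * ∑ k ∈ Finset.Icc (-(N : ℤ)) (N : ℤ),
    C (gtilde s ((k : ℝ) / (2 * ((N : ℝ) + 1)))) * Chebyshev.T ℝ k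

lemma eval_cos_sigmaPoly (s N : ℕ) (t : ℝ) : (sigmaPoly s N).eval (Real.cos t) = sigmaT s N t := by
  rw [sigmaPoly, sigmaT, eval_mul, eval_C, eval_finsetSum]
  have : (1 / (gnorm s N : ℂ)) = ((1 / gnorm s N : ℝ) : ℂ) := by push_cast; rfl
  rw [this, Complex.re_ofReal_mul, Complex.re_sum]
  congr 1
  apply Finset.sum_congr rfl
  intro k _
  rw [eval_mul, eval_C, Chebyshev.T_real_cos, Complex.re_ofReal_mul]
  have : (k : ℂ) * t = ((k * t : ℝ) : ℂ) := by push_cast; rfl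
  rw [this, Complex.exp_ofReal_mul_I_re]

/-- The rotation matrix of the quaternion with real part `a` and imaginary part `v`. -/
def quatMat (a : ℝ) (v : Fin 3 → ℝ) : Mat3 :=
  !![a ^ 2 + v 0 ^ 2 - v 1 ^ 2 - v 2 ^ 2, 2 * (v 0 * v 1 - a * v 2), 2 * (v 0 * v 2 + a * v 1);
    2 * (v 0 * v 1 + a * v 2), a ^ 2 - v 0 ^ 2 + v 1 ^ 2 - v 2 ^ 2, 2 * (v 1 * v 2 - a * v 0);
    2 * (v 0 * v 2 - a * v 1), 2 * (v 1 * v 2 + a * v 0), a ^ 2 - v 0 ^ 2 - v 1 ^ 2 + v 2 ^ 2]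

lemma trace_quatMat (a : ℝ) (v : Fin 3 → ℝ) :
    Matrix.trace (quatMat a v) = 3 * a ^ 2 - (v 0 ^ 2 + v 1 ^ 2 + v 2 ^ 2) := by
  simp [quatMat, Matrix.trace, Fin.sum_univ_three]; ring

/-- The cross product matrix. -/
noncomputable def crossMat (v : Fin 3 → ℝ) (i n : Fin 3) : ℝ := ∑ k, eps3 i n k * v k

lemma halfTrace_quatMat_one (a : ℝ) (v : Fin 3 → ℝ) (h : a ^ 2 + v 0 ^ 2 + v 1 ^ 2 + v 2 ^ 2 = 1) :
    halfTrace (quatMat a v) 1 - 1 / 2 = 2 * a ^ 2 - 1 := by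
  rw [halfTrace, mul_one, trace_quatMat]; linarith

lemma halfTrace_quatMat_Lgen (a : ℝ) (v : Fin 3 → ℝ) (n : Fin 3) :
    halfTrace (quatMat a v) (Lgen n) = -2 * a * v n := by
  fin_cases n <;> simp [halfTrace, quatMat, Lgen, Matrix.trace, Fin.sum_univ_three] <;> ring

lemma halfTrace_quatMat_Lgen_mul (a : ℝ) (v : Fin 3 → ℝ) (i n : Fin 3) :
    halfTrace (quatMat a v) (Lgen i * Lgen n) =
      v i * v n - (if i = n then a ^ 2 else 0) - a * crossMat v i n := by
  fin_cases i <;> fin_cases n <;>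
    simp [halfTrace, quatMat, Lgen, Matrix.trace, Fin.sum_univ_three, crossMat, eps3] <;> ring

lemma halfTrace_quatMat_Lgen_mul_mul (a : ℝ) (v : Fin 3 → ℝ) (j i k : Fin 3) :
    halfTrace (quatMat a v) (Lgen j * (Lgen i * Lgen k)) =
      (∑ n, eps3 j i n * halfTrace (quatMat a v) (Lgen n * Lgen k)) / 2 +
      a / 2 * ((if j = i then 2 * v k else 0) + (if j = k then v i else 0) +
        (if i = k then v j else 0)) + (crossMat v j k * v i + crossMat v i k * v j) / 2 := by
  simp_rw [halfTrace_quatMat_Lgen_mul]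
  fin_cases j <;> fin_cases i <;> fin_cases k <;>
    simp [halfTrace, quatMat, Lgen, Matrix.trace, Fin.sum_univ_three, crossMat, eps3] <;> ring

/-- Four times the outer square of the quaternion of a rotation matrix. -/
def quatOuter (z : Mat3) : Matrix (Fin 4) (Fin 4) ℝ :=
  !![1 + z 0 0 + z 1 1 + z 2 2, z 2 1 - z 1 2, z 0 2 - z 2 0, z 1 0 - z 0 1;
    z 2 1 - z 1 2, 1 + z 0 0 - z 1 1 - z 2 2, z 0 1 + z 1 0, z 0 2 + z 2 0;
    z 0 2 - z 2 0, z 0 1 + z 1 0, 1 - z 0 0 + z 1 1 - z 2 2, z 1 2 + z 2 1;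
    z 1 0 - z 0 1, z 0 2 + z 2 0, z 1 2 + z 2 1, 1 - z 0 0 - z 1 1 + z 2 2]

lemma IsSO3.adjugate_eq {z : Mat3} (hz : IsSO3 z) : z.adjugate = z.transpose := by
  rw [← hz.inv_eq, Matrix.inv_def, hz.2]; simp

lemma IsSO3.quatOuter_mul {z : Mat3} (hz : IsSO3 z) (a b c : Fin 4) :
    quatOuter z a b * quatOuter z a c = quatOuter z a a * quatOuter z b c := by
  have h1 := fun i j => congrFun (congrFun hz.1 i) j
  have h2 := fun i j => congrFun (congrFun hz.mul_transpose_self i) j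
  have h3 := fun i j => congrFun (congrFun hz.adjugate_eq i) j
  simp only [Matrix.adjugate_fin_three, Matrix.mul_apply, Matrix.transpose_apply,
    Fin.sum_univ_three, Matrix.one_apply] at h1 h2 h3
  have a00 := h1 0 0; have a01 := h1 0 1; have a02 := h1 0 2
  have a11 := h1 1 1; have a12 := h1 1 2; have a22 := h1 2 2
  have b00 := h2 0 0; have b01 := h2 0 1; have b02 := h2 0 2
  have b11 := h2 1 1; have b12 := h2 1 2; have b22 := h2 2 2
  have c00 := h3 0 0; have c01 := h3 0 1; have c02 := h3 0 2
  have c10 := h3 1 0; have c11 := h3 1 1; have c12 := h3 1 2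
  have c20 := h3 2 0; have c21 := h3 2 1; have c22 := h3 2 2
  clear h1 h2 h3
  simp at a00 a01 a02 a11 a12 a22 b00 b01 b02 b11 b12 b22 c00 c01 c02 c10 c11 c12 c20 c21 c22
  fin_cases a <;> fin_cases b <;> fin_cases c <;> simp [quatOuter] <;> linarith

lemma quatMat_neg (a : ℝ) (v : Fin 3 → ℝ) : quatMat (-a) (-v) = quatMat a v := by
  ext i j
  fin_cases i <;> fin_cases j <;> simp [quatMat]

lemma IsSO3.exists_quatMat {z : Mat3} (hz : IsSO3 z) :
    ∃ (a : ℝ) (v : Fin 3 → ℝ), 0 ≤ a ∧ a ^ 2 + v 0 ^ 2 + v 1 ^ 2 + v 2 ^ 2 = 1 ∧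
      z = quatMat a v := by
  suffices h : ∃ (a : ℝ) (v : Fin 3 → ℝ), a ^ 2 + v 0 ^ 2 + v 1 ^ 2 + v 2 ^ 2 = 1 ∧
      z = quatMat a v by
    obtain ⟨a, v, h1, h2⟩ := h
    rcases le_total 0 a with ha | ha
    · exact ⟨a, v, ha, h1, h2⟩
    · exact ⟨-a, -v, by linarith, by simpa using h1, by rw [quatMat_neg, h2]⟩
  obtain ⟨p, hp⟩ : ∃ p, 0 < quatOuter z p p := by
    by_contra! h
    have h0 := h 0; have h1 := h 1; have h2 := h 2; have h3 := h 3
    simp [quatOuter] at h0 h1 h2 h3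
    linarith
  set q : Fin 4 → ℝ := fun b => quatOuter z p b / (2 * √(quatOuter z p p)) with hq
  have hqq : ∀ b c, q b * q c = quatOuter z b c / 4 := by
    intro b c
    have h := hz.quatOuter_mul p b c
    have hs := Real.mul_self_sqrt hp.le
    have hs0 := Real.sqrt_pos.mpr hp
    simp only [hq]
    rw [div_mul_div_comm, h, show 2 * √(quatOuter z p p) * (2 * √(quatOuter z p p)) =
      quatOuter z p p * 4 by linarith]
    field_simp
  refine ⟨q 0, ![q 1, q 2, q 3], ?_, ?_⟩
  · have h0 := hqq 0 0; have h1 := hqq 1 1; have h2 := hqq 2 2; have h3 := hqq 3 3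
    simp [quatOuter] at h0 h1 h2 h3 ⊢
    linarith
  · have h00 := hqq 0 0; have h01 := hqq 0 1; have h02 := hqq 0 2; have h03 := hqq 0 3
    have h11 := hqq 1 1; have h12 := hqq 1 2; have h13 := hqq 1 3
    have h22 := hqq 2 2; have h23 := hqq 2 3; have h33 := hqq 3 3
    simp [quatOuter] at h00 h01 h02 h03 h11 h12 h13 h22 h23 h33
    ext i j
    fin_cases i <;> fin_cases j <;> simp [quatMat] <;> linarith

lemma rotAngle_quatMat {a : ℝ} {v : Fin 3 → ℝ} (ha : 0 ≤ a)
    (h : a ^ 2 + v 0 ^ 2 + v 1 ^ 2 + v 2 ^ 2 = 1) : rotAngle (quatMat a v) = 2 * Real.arccos a := by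
  have ha1 : a ≤ 1 := by nlinarith [sq_nonneg (v 0), sq_nonneg (v 1), sq_nonneg (v 2)]
  have h1 : Real.arccos a ≤ π / 2 := Real.arccos_le_pi_div_two.mpr ha
  rw [rotAngle, trace_quatMat]
  rw [show (3 * a ^ 2 - (v 0 ^ 2 + v 1 ^ 2 + v 2 ^ 2) - 1) / 2 = 2 * a ^ 2 - 1 by linarith]
  have h2 := Real.cos_two_mul (Real.arccos a)
  rw [Real.cos_arccos (by linarith) ha1] at h2
  rw [← h2, Real.arccos_cos (by linarith [Real.arccos_nonneg a]) (by linarith)]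

lemma sigmaK_eq {s N : ℕ} {x y : Mat3} (hx : IsSO3 x) (hy : IsSO3 y) :
    sigmaK s N x y = (sigmaPoly s N).eval (halfTrace (y.transpose * x) 1 - 1 / 2) := by
  obtain ⟨a, v, ha, h1, h2⟩ := (hy.transpose.mul hx).exists_quatMat
  rw [sigmaK, hy.inv_eq, h2, halfTrace_quatMat_one a v h1, rotAngle_quatMat ha h1,
    ← eval_cos_sigmaPoly, Real.cos_two_mul, Real.cos_arccos (by linarith)]
  nlinarith [sq_nonneg (v 0), sq_nonneg (v 1), sq_nonneg (v 2)]

/-- First derivative along `Lgen i` of `z ↦ q ((tr z - 1) / 2)`. -/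
noncomputable def zonalDeriv (q : ℝ[X]) (i : Fin 3) (z : Mat3) : ℝ :=
  q.derivative.eval (halfTrace z 1 - 1 / 2) * halfTrace z (Lgen i)

/-- Second derivative along `Lgen i`, `Lgen n` of `z ↦ q ((tr z - 1) / 2)`. -/
noncomputable def zonalDerivTwo (q : ℝ[X]) (i n : Fin 3) (z : Mat3) : ℝ :=
  q.derivative.derivative.eval (halfTrace z 1 - 1 / 2) * halfTrace z (Lgen i) *
    halfTrace z (Lgen n) +
  q.derivative.eval (halfTrace z 1 - 1 / 2) * halfTrace z (Lgen i * Lgen n)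

/-- Third derivative along `Lgen j`, `Lgen i`, `Lgen n` of `z ↦ q ((tr z - 1) / 2)`. -/
noncomputable def zonalDerivThree (q : ℝ[X]) (j i n : Fin 3) (z : Mat3) : ℝ :=
  (q.derivative.derivative.derivative.eval (halfTrace z 1 - 1 / 2) * halfTrace z (Lgen j) *
      halfTrace z (Lgen i) +
    q.derivative.derivative.eval (halfTrace z 1 - 1 / 2) * halfTrace z (Lgen j * Lgen i)) *
    halfTrace z (Lgen n) +
  q.derivative.derivative.eval (halfTrace z 1 - 1 / 2) * halfTrace z (Lgen i) *
    halfTrace z (Lgen j * Lgen n) +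
  (q.derivative.derivative.eval (halfTrace z 1 - 1 / 2) * halfTrace z (Lgen j) *
      halfTrace z (Lgen i * Lgen n) +
    q.derivative.eval (halfTrace z 1 - 1 / 2) * halfTrace z (Lgen j * (Lgen i * Lgen n)))

lemma hasDerivAt_zonalDeriv (q : ℝ[X]) (i n : Fin 3) (z : Mat3) :
    HasDerivAt (fun t : ℝ => zonalDeriv q n (z * NormedSpace.exp (t • Lgen i)))
      (zonalDerivTwo q i n z) 0 := by
  have h := (hasDerivAt_eval_halfTrace q.derivative z i).mul (hasDerivAt_halfTrace z (Lgen n) i)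
  rw [zero_smul, NormedSpace.exp_zero, mul_one] at h
  exact h

lemma hasDerivAt_zonalDerivTwo (q : ℝ[X]) (j i n : Fin 3) (z : Mat3) :
    HasDerivAt (fun t : ℝ => zonalDerivTwo q i n (z * NormedSpace.exp (t • Lgen j)))
      (zonalDerivThree q j i n z) 0 := by
  have h1 := hasDerivAt_eval_halfTrace q.derivative z j
  have h2 := hasDerivAt_eval_halfTrace q.derivative.derivative z j
  have h := ((h2.mul (hasDerivAt_halfTrace z (Lgen i) j)).mul
    (hasDerivAt_halfTrace z (Lgen n) j)).add (h1.mul (hasDerivAt_halfTrace z (Lgen i * Lgen n) j))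
  simp only [zero_smul, NormedSpace.exp_zero, mul_one, Pi.mul_apply] at h
  exact h

section derivatives

variable {s N : ℕ} {x y : Mat3}

lemma Xx_sigmaK (i : Fin 3) (hx : IsSO3 x) (hy : IsSO3 y) :
    Xx i (sigmaK s N) x y = zonalDeriv (sigmaPoly s N) i (y.transpose * x) :=
  Xx_eq_of_eq (G := fun z => (sigmaPoly s N).eval (halfTrace z 1 - 1 / 2))
    (fun _ _ => sigmaK_eq) (fun z => hasDerivAt_eval_halfTrace _ z i) x y hx hy

lemma Xy_sigmaK (n : Fin 3) (hx : IsSO3 x) (hy : IsSO3 y) :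
    Xy n (sigmaK s N) x y = -zonalDeriv (sigmaPoly s N) n (y.transpose * x) := by
  have h := hasDerivAt_eval_halfTrace (sigmaPoly s N) (y.transpose * x) n
  have h0 : HasDerivAt (fun t : ℝ => (sigmaPoly s N).eval
      (halfTrace (y.transpose * x * NormedSpace.exp (t • Lgen n)) 1 - 1 / 2))
      (zonalDeriv (sigmaPoly s N) n (y.transpose * x)) (-(0 : ℝ)) := by
    rw [neg_zero]; exact h
  have h1 := h0.comp (0 : ℝ) (hasDerivAt_neg (0 : ℝ))
  rw [mul_neg_one] at h1
  rw [Xy, ← h1.deriv]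
  congr 1
  funext t
  rw [sigmaK_eq hx (hy.mul (isSO3_exp_Lgen t n)), Matrix.transpose_mul, transpose_exp_Lgen,
    Function.comp_apply]
  simp only [halfTrace, mul_one]
  rw [Matrix.mul_assoc, Matrix.trace_mul_comm (NormedSpace.exp _)]

lemma Xx_Xx_sigmaK (i n : Fin 3) (hx : IsSO3 x) (hy : IsSO3 y) :
    Xx i (Xx n (sigmaK s N)) x y = zonalDerivTwo (sigmaPoly s N) i n (y.transpose * x) :=
  Xx_eq_of_eq (fun _ _ => Xx_sigmaK n) (hasDerivAt_zonalDeriv _ i n) x y hx hy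

lemma Xx_Xy_sigmaK (i n : Fin 3) (hx : IsSO3 x) (hy : IsSO3 y) :
    Xx i (Xy n (sigmaK s N)) x y = -zonalDerivTwo (sigmaPoly s N) i n (y.transpose * x) :=
  Xx_eq_of_eq (G := fun z => -zonalDeriv (sigmaPoly s N) n z)
    (G' := fun z => -zonalDerivTwo (sigmaPoly s N) i n z)
    (fun _ _ => Xy_sigmaK n) (fun z => (hasDerivAt_zonalDeriv _ i n z).neg) x y hx hy

lemma Xx_Xx_Xy_sigmaK (j i n : Fin 3) (hx : IsSO3 x) (hy : IsSO3 y) :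
    Xx j (Xx i (Xy n (sigmaK s N))) x y =
      -zonalDerivThree (sigmaPoly s N) j i n (y.transpose * x) :=
  Xx_eq_of_eq (G := fun z => -zonalDerivTwo (sigmaPoly s N) i n z)
    (G' := fun z => -zonalDerivThree (sigmaPoly s N) j i n z)
    (fun _ _ => Xx_Xy_sigmaK i n) (fun z => (hasDerivAt_zonalDerivTwo _ j i n z).neg) x y hx hy

end derivatives

section radial

variable (s N : ℕ) (t : ℝ)

lemma sigmaDeriv_zero_eq :
    sigmaDeriv s N 0 t = (sigmaPoly s N).eval (Real.cos t) := by
  rw [sigmaDeriv_zero, eval_cos_sigmaPoly]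

lemma hasDerivAt_eval_cos (q : ℝ[X]) :
    HasDerivAt (fun t => q.eval (Real.cos t)) (-Real.sin t * q.derivative.eval (Real.cos t)) t := by
  have := (q.hasDerivAt (Real.cos t)).comp t (Real.hasDerivAt_cos t)
  rwa [mul_comm] at this

lemma sigmaDeriv_one_eq :
    sigmaDeriv s N 1 t = -Real.sin t * (sigmaPoly s N).derivative.eval (Real.cos t) := by
  have h := hasDerivAt_sigmaDeriv s N 0 t
  rw [funext (sigmaDeriv_zero_eq s N)] at h
  exact h.unique (hasDerivAt_eval_cos t _)

lemma sigmaDeriv_two_eq :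
    sigmaDeriv s N 2 t =
      Real.sin t ^ 2 * (sigmaPoly s N).derivative.derivative.eval (Real.cos t) -
        Real.cos t * (sigmaPoly s N).derivative.eval (Real.cos t) := by
  have h := hasDerivAt_sigmaDeriv s N 1 t
  rw [funext (sigmaDeriv_one_eq s N)] at h
  rw [h.unique ((Real.hasDerivAt_sin t).neg.mul (hasDerivAt_eval_cos t _))]
  simp only [Pi.neg_apply]
  ring

lemma sigmaDeriv_three_eq :
    sigmaDeriv s N 3 t =
      -Real.sin t ^ 3 * (sigmaPoly s N).derivative.derivative.derivative.eval (Real.cos t) +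
        3 * Real.sin t * Real.cos t * (sigmaPoly s N).derivative.derivative.eval (Real.cos t) +
        Real.sin t * (sigmaPoly s N).derivative.eval (Real.cos t) := by
  have h := hasDerivAt_sigmaDeriv s N 2 t
  rw [funext (sigmaDeriv_two_eq s N)] at h
  rw [h.unique ((((Real.hasDerivAt_sin t).pow 2).mul (hasDerivAt_eval_cos t _)).sub
    ((Real.hasDerivAt_cos t).mul (hasDerivAt_eval_cos t _)))]
  simp only [Pi.pow_apply]
  push_cast
  ring

end radial

/-- Half of the cotangent of `t / 2`. -/
noncomputable def halfCot (t : ℝ) : ℝ := Real.cos (t / 2) / (2 * Real.sin (t / 2))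

lemma halfCot_nonneg {t : ℝ} (h0 : 0 < t) (hpi : t ≤ π) : 0 ≤ halfCot t :=
  div_nonneg (Real.cos_nonneg_of_neg_pi_div_two_le_of_le (by linarith) (by linarith))
    (mul_nonneg two_pos.le (Real.sin_nonneg_of_nonneg_of_le_pi (by linarith) (by linarith)))

lemma halfCot_le_inv {t : ℝ} (h0 : 0 < t) (hpi : t ≤ π) : halfCot t ≤ t⁻¹ := by
  have hS : 0 < Real.sin (t / 2) := Real.sin_pos_of_pos_of_lt_pi (by linarith) (by linarith)
  rw [halfCot, div_le_iff₀ (by positivity), inv_mul_eq_div, le_div_iff₀ h0]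
  rcases hpi.lt_or_eq with h | h
  · have hc : 0 < Real.cos (t / 2) := Real.cos_pos_of_mem_Ioo ⟨by linarith, by linarith⟩
    have h2 := Real.lt_tan (x := t / 2) (by linarith) (by linarith)
    rw [Real.tan_eq_sin_div_cos, lt_div_iff₀ hc] at h2
    linarith
  · rw [h, Real.cos_pi_div_two, Real.sin_pi_div_two]; norm_num

lemma crossMat_smul (S : ℝ) (e : Fin 3 → ℝ) (i n : Fin 3) :
    crossMat (fun m => S * e m) i n = S * crossMat e i n := by
  rw [crossMat, crossMat, Finset.mul_sum]
  exact Finset.sum_congr rfl fun k _ => by ring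

section pointwise

variable {s N : ℕ} {t : ℝ} {e : Fin 3 → ℝ}

/-- The rotation by the angle `t` about the axis `e`. -/
noncomputable def axisRot (t : ℝ) (e : Fin 3 → ℝ) : Mat3 :=
  quatMat (Real.cos (t / 2)) (fun m => Real.sin (t / 2) * e m)

lemma halfTrace_axisRot_one (he : e 0 ^ 2 + e 1 ^ 2 + e 2 ^ 2 = 1) :
    halfTrace (axisRot t e) 1 - 1 / 2 = Real.cos t := by
  have h := Real.cos_sq_add_sin_sq (t / 2)
  rw [axisRot, halfTrace_quatMat_one, ← Real.cos_two_mul, mul_div_cancel₀ _ two_ne_zero]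
  linear_combination h + Real.sin (t / 2) ^ 2 * he

lemma sin_cos_half (t : ℝ) : Real.sin t = 2 * Real.sin (t / 2) * Real.cos (t / 2) ∧
    Real.cos t = Real.cos (t / 2) ^ 2 - Real.sin (t / 2) ^ 2 := by
  rw [← Real.sin_two_mul, ← Real.cos_two_mul', mul_div_cancel₀ _ two_ne_zero]
  exact ⟨rfl, rfl⟩

lemma zonalDeriv_axisRot (n : Fin 3) (he : e 0 ^ 2 + e 1 ^ 2 + e 2 ^ 2 = 1) :
    zonalDeriv (sigmaPoly s N) n (axisRot t e) = e n * sigmaDeriv s N 1 t := by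
  rw [zonalDeriv, halfTrace_axisRot_one he, sigmaDeriv_one_eq, axisRot, halfTrace_quatMat_Lgen]
  rw [(sin_cos_half t).1]
  ring

lemma zonalDerivTwo_axisRot (i n : Fin 3) (he : e 0 ^ 2 + e 1 ^ 2 + e 2 ^ 2 = 1)
    (ht : Real.sin (t / 2) ≠ 0) :
    zonalDerivTwo (sigmaPoly s N) i n (axisRot t e) =
      (sigmaDeriv s N 2 t - halfCot t * sigmaDeriv s N 1 t) * (e i * e n) +
        halfCot t * sigmaDeriv s N 1 t * (if i = n then 1 else 0) +
        sigmaDeriv s N 1 t / 2 * crossMat e i n := by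
  rw [zonalDerivTwo, halfTrace_axisRot_one he, sigmaDeriv_one_eq, sigmaDeriv_two_eq, axisRot,
    halfTrace_quatMat_Lgen, halfTrace_quatMat_Lgen, halfTrace_quatMat_Lgen_mul, crossMat_smul,
    halfCot]
  obtain ⟨h1, h2⟩ := sin_cos_half t
  generalize (sigmaPoly s N).derivative.derivative.eval (Real.cos t) = q2
  generalize (sigmaPoly s N).derivative.eval (Real.cos t) = q1
  rw [h1, h2]
  generalize Real.cos (t / 2) = a
  generalize crossMat e i n = w
  split_ifs <;> field_simp <;> ring

lemma zonalDerivThree_axisRot (j i k : Fin 3) (he : e 0 ^ 2 + e 1 ^ 2 + e 2 ^ 2 = 1)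
    (ht : Real.sin (t / 2) ≠ 0) :
    zonalDerivThree (sigmaPoly s N) j i k (axisRot t e) -
        (∑ n, eps3 j i n * zonalDerivTwo (sigmaPoly s N) n k (axisRot t e)) / 2 =
      sigmaDeriv s N 3 t * (e j * e i * e k) -
        halfCot t * (sigmaDeriv s N 2 t - halfCot t * sigmaDeriv s N 1 t) *
          (3 * (e j * e i * e k) - ((if j = i then e k else 0) + (if j = k then e i else 0) +
            (if i = k then e j else 0))) +
        sigmaDeriv s N 1 t / 4 * (e j * e i * e k - (if j = i then e k else 0)) +
        (sigmaDeriv s N 2 t - halfCot t * sigmaDeriv s N 1 t) / 2 *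
          (crossMat e j k * e i + crossMat e i k * e j) := by
  have hsum : ∑ n, eps3 j i n * zonalDerivTwo (sigmaPoly s N) n k (axisRot t e) =
      (sigmaPoly s N).derivative.derivative.eval (Real.cos t) *
        (-2 * Real.cos (t / 2) * crossMat (fun m => Real.sin (t / 2) * e m) j i) *
        halfTrace (axisRot t e) (Lgen k) +
      (sigmaPoly s N).derivative.eval (Real.cos t) *
        ∑ n, eps3 j i n * halfTrace (axisRot t e) (Lgen n * Lgen k) := by
    simp only [zonalDerivTwo, halfTrace_axisRot_one he, crossMat, Fin.sum_univ_three]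
    simp only [axisRot, halfTrace_quatMat_Lgen]
    ring
  rw [hsum, zonalDerivThree, halfTrace_axisRot_one he, sigmaDeriv_one_eq, sigmaDeriv_two_eq,
    sigmaDeriv_three_eq, axisRot, halfTrace_quatMat_Lgen_mul_mul]
  generalize ∑ n, eps3 j i n * halfTrace (quatMat (Real.cos (t / 2))
    fun m => Real.sin (t / 2) * e m) (Lgen n * Lgen k) = W
  simp only [halfTrace_quatMat_Lgen, halfTrace_quatMat_Lgen_mul, crossMat_smul, halfCot]
  obtain ⟨h1, h2⟩ := sin_cos_half t
  generalize (sigmaPoly s N).derivative.derivative.derivative.eval (Real.cos t) = q3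
  generalize (sigmaPoly s N).derivative.derivative.eval (Real.cos t) = q2
  generalize (sigmaPoly s N).derivative.eval (Real.cos t) = q1
  rw [h1, h2]
  generalize Real.cos (t / 2) = a
  generalize crossMat e j i = w1
  generalize crossMat e i k = w2
  generalize crossMat e j k = w3
  split_ifs <;> field_simp <;> ring

end pointwise

section axisBounds

variable {e : Fin 3 → ℝ}

lemma sq_axis_le (he : e 0 ^ 2 + e 1 ^ 2 + e 2 ^ 2 = 1) (i : Fin 3) : e i ^ 2 ≤ 1 := by
  have h0 := sq_nonneg (e 0); have h1 := sq_nonneg (e 1); have h2 := sq_nonneg (e 2)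
  fin_cases i <;> simp only [Fin.zero_eta, Fin.mk_one, Fin.reduceFinMk] <;> linarith

lemma sq_axis_add_sq_le (he : e 0 ^ 2 + e 1 ^ 2 + e 2 ^ 2 = 1) {i n : Fin 3} (h : i ≠ n) :
    e i ^ 2 + e n ^ 2 ≤ 1 := by
  have h0 := sq_nonneg (e 0); have h1 := sq_nonneg (e 1); have h2 := sq_nonneg (e 2)
  fin_cases i <;> fin_cases n <;> simp at h ⊢ <;> linarith

lemma abs_axis_le (he : e 0 ^ 2 + e 1 ^ 2 + e 2 ^ 2 = 1) (i : Fin 3) : |e i| ≤ 1 := by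
  rw [← sq_le_one_iff_abs_le_one]; exact sq_axis_le he i

lemma abs_axis_mul_le (he : e 0 ^ 2 + e 1 ^ 2 + e 2 ^ 2 = 1) {i n : Fin 3} (h : i ≠ n) :
    |e i * e n| ≤ 1 / 2 := by
  have h0 := sq_axis_add_sq_le he h
  rw [abs_le]
  constructor <;> nlinarith [sq_nonneg (e i + e n), sq_nonneg (e i - e n)]

lemma crossMat_eq_zero_of_eq (i : Fin 3) : crossMat e i i = 0 := by
  fin_cases i <;> simp [crossMat, eps3]

lemma abs_crossMat_le (he : e 0 ^ 2 + e 1 ^ 2 + e 2 ^ 2 = 1) (i n : Fin 3) :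
    |crossMat e i n| ≤ 1 := by
  have h0 := abs_axis_le he 0; have h1 := abs_axis_le he 1; have h2 := abs_axis_le he 2
  fin_cases i <;> fin_cases n <;> simp [crossMat, eps3, h0, h1, h2]

lemma abs_crossMat_mul_add_le (he : e 0 ^ 2 + e 1 ^ 2 + e 2 ^ 2 = 1) (j i k : Fin 3) :
    |crossMat e j k * e i + crossMat e i k * e j| ≤ 1 := by
  have h0 := sq_nonneg (e 0); have h1 := sq_nonneg (e 1); have h2 := sq_nonneg (e 2)
  have p01 := sq_nonneg (e 0 + e 1); have m01 := sq_nonneg (e 0 - e 1)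
  have p02 := sq_nonneg (e 0 + e 2); have m02 := sq_nonneg (e 0 - e 2)
  have p12 := sq_nonneg (e 1 + e 2); have m12 := sq_nonneg (e 1 - e 2)
  rw [abs_le]
  fin_cases j <;> fin_cases i <;> fin_cases k <;> constructor <;>
    simp [crossMat, eps3] <;> linarith

lemma abs_axis_cube_le (he : e 0 ^ 2 + e 1 ^ 2 + e 2 ^ 2 = 1) (j i k : Fin 3) :
    |e j * e i * e k| ≤ 1 := by
  rw [abs_mul, abs_mul]
  exact mul_le_one₀ (mul_le_one₀ (abs_axis_le he j) (abs_nonneg _) (abs_axis_le he i))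
    (abs_nonneg _) (abs_axis_le he k)

lemma abs_axis_cube_sub_le (he : e 0 ^ 2 + e 1 ^ 2 + e 2 ^ 2 = 1) (j i k : Fin 3) :
    |e j * e i * e k - (if j = i then e k else 0)| ≤ 1 := by
  split_ifs with h
  · subst h
    rw [show e j * e j * e k - e k = -((1 - e j ^ 2) * e k) by ring, abs_neg, abs_mul]
    refine mul_le_one₀ ?_ (abs_nonneg _) (abs_axis_le he k)
    rw [abs_le]
    constructor <;> linarith [sq_axis_le he j, sq_nonneg (e j)]
  · rw [sub_zero]; exact abs_axis_cube_le he j i k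

end axisBounds

lemma abs_mul_one_sub_sq_le {x : ℝ} (hx : x ^ 2 ≤ 1) : |x * (1 - x ^ 2)| ≤ 0.4 := by
  have h1 := sq_le_one_iff_abs_le_one _ |>.mp hx
  have h0 := abs_nonneg x
  rw [abs_mul, abs_of_nonneg (sub_nonneg.mpr hx), ← sq_abs]
  nlinarith [mul_nonneg (sq_nonneg (|x| - 0.577)) (by linarith : 0 ≤ |x| + 1.154)]

lemma abs_harmonic_le {a b c : ℝ} (h : a ^ 2 + b ^ 2 + c ^ 2 ≤ 1) :
    |3 * (a * b * c)| ≤ 1.2 ∧ |3 * (a * a * b) - b| ≤ 1.2 ∧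
      |3 * (a * a * a) - (a + a + a)| ≤ 1.2 := by
  have a0 := sq_nonneg a; have b0 := sq_nonneg b; have c0 := sq_nonneg c
  have ha := abs_mul_one_sub_sq_le (x := a) (by linarith)
  have hb := abs_mul_one_sub_sq_le (x := b) (by linarith)
  have hc := abs_mul_one_sub_sq_le (x := c) (by linarith)
  have hb1 : |b| ≤ 1 := (sq_le_one_iff_abs_le_one _).mp (by linarith)
  refine ⟨?_, ?_, ?_⟩
  · have h1 : |a * b| ≤ (1 - c ^ 2) / 2 := by
      rw [abs_le]
      constructor <;> nlinarith [sq_nonneg (a + b), sq_nonneg (a - b)]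
    rw [abs_mul, abs_of_nonneg (by linarith : 0 ≤ 1 - c ^ 2)] at hc
    rw [abs_mul, abs_mul (a * b), abs_of_pos (by norm_num : (0 : ℝ) < 3)]
    have := mul_le_mul_of_nonneg_right h1 (abs_nonneg c)
    linarith
  · rw [abs_mul, abs_of_nonneg (by linarith : 0 ≤ 1 - b ^ 2)] at hb
    rw [show 3 * (a * a * b) - b = b * (3 * a ^ 2 - 1) by ring, abs_mul]
    rcases le_total 0 (3 * a ^ 2 - 1) with h1 | h1
    · rw [abs_of_nonneg h1]
      have := mul_le_mul_of_nonneg_left (by linarith : 3 * a ^ 2 - 1 ≤ 2 * (1 - b ^ 2)) (abs_nonneg b)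
      linarith
    · rw [abs_of_nonpos h1]
      have := mul_le_mul_of_nonneg_left (by linarith : -(3 * a ^ 2 - 1) ≤ 1) (abs_nonneg b)
      linarith
  · rw [show 3 * (a * a * a) - (a + a + a) = -3 * (a * (1 - a ^ 2)) by ring, abs_mul]
    norm_num at ha ⊢; linarith

lemma abs_axis_harmonic_le {e : Fin 3 → ℝ} (he : e 0 ^ 2 + e 1 ^ 2 + e 2 ^ 2 = 1)
    (j i k : Fin 3) :
    |3 * (e j * e i * e k) - ((if j = i then e k else 0) + (if j = k then e i else 0) +
      (if i = k then e j else 0))| ≤ 1.2 := by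
  by_cases hji : j = i
  · subst hji
    by_cases hjk : j = k
    · subst hjk
      simpa using (abs_harmonic_le (a := e j) (b := 0) (c := 0) (by simpa using sq_axis_le he j)).2.2
    · have := (abs_harmonic_le (a := e j) (b := e k) (c := 0)
        (by simpa using sq_axis_add_sq_le he hjk)).2.1
      simpa [hjk] using this
  · by_cases hjk : j = k
    · subst hjk
      have := (abs_harmonic_le (a := e j) (b := e i) (c := 0)
        (by simpa using sq_axis_add_sq_le he hji)).2.1
      rw [mul_right_comm] at this
      simpa [hji, Ne.symm hji] using this
    · by_cases hik : i = k
      · subst hik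
        have := (abs_harmonic_le (a := e i) (b := e j) (c := 0)
          (by simpa using sq_axis_add_sq_le he (Ne.symm hji))).2.1
        rw [mul_rotate] at this
        simpa [hji, mul_comm, mul_left_comm, mul_assoc] using this
      · have h : e j ^ 2 + e i ^ 2 + e k ^ 2 ≤ 1 := by
          fin_cases j <;> fin_cases i <;> fin_cases k <;> simp at hji hjk hik ⊢ <;> linarith
        simpa [hji, hjk, hik] using (abs_harmonic_le h).1

lemma rotAngle_nonneg (z : Mat3) : 0 ≤ rotAngle z := Real.arccos_nonneg _

lemma rotAngle_le_pi (z : Mat3) : rotAngle z ≤ π := Real.arccos_le_pi _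

lemma IsSO3.exists_axisRot {z : Mat3} (hz : IsSO3 z) :
    ∃ e : Fin 3 → ℝ, e 0 ^ 2 + e 1 ^ 2 + e 2 ^ 2 = 1 ∧ z = axisRot (rotAngle z) e := by
  obtain ⟨a, v, ha, h1, h2⟩ := hz.exists_quatMat
  have v0 := sq_nonneg (v 0); have v1 := sq_nonneg (v 1); have v2 := sq_nonneg (v 2)
  have ha1 : a ≤ 1 := by nlinarith
  have hω : rotAngle z / 2 = Real.arccos a := by rw [h2, rotAngle_quatMat ha h1]; ring
  have hcos : Real.cos (rotAngle z / 2) = a := by rw [hω, Real.cos_arccos (by linarith) ha1]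
  have hS2 := Real.cos_sq_add_sin_sq (rotAngle z / 2)
  rw [hcos] at hS2
  rcases eq_or_ne (Real.sin (rotAngle z / 2)) 0 with hS | hS
  · rw [hS] at hS2
    refine ⟨![1, 0, 0], by simp, ?_⟩
    rw [axisRot, hcos, hS]
    conv_lhs => rw [h2]
    congr 1
    funext m
    rw [zero_mul, ← sq_eq_zero_iff]
    fin_cases m <;> simp only [Fin.zero_eta, Fin.mk_one, Fin.reduceFinMk] <;> linarith
  · refine ⟨fun m => v m / Real.sin (rotAngle z / 2), ?_, ?_⟩
    · field_simp
      linarith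
    · rw [axisRot, hcos]
      conv_lhs => rw [h2]
      congr 1
      funext m
      field_simp

/-- The common decay factor of the kernel derivatives at angle `t`. -/
noncomputable def decayWeight (s N : ℕ) (t : ℝ) : ℝ :=
  1.02 * (s - 1).factorial * 2 ^ (s - 1) / (((N : ℝ) + 1) * t) ^ s

lemma decayWeight_nonneg {s N : ℕ} {t : ℝ} (ht : 0 ≤ t) : 0 ≤ decayWeight s N t := by
  rw [decayWeight]; positivity

section

variable {s N : ℕ} {z : Mat3}

lemma cConst_div_eq {l : ℕ} {c : ℝ} (hs6 : 6 ≤ s) (t : ℝ)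
    (hc : cConst l s = 1.02 * (s - 1).factorial * 2 ^ s * c) :
    cConst l s / (((N : ℝ) + 1) * t) ^ s = 2 * c * decayWeight s N t := by
  obtain ⟨r, rfl⟩ : ∃ r, s = r + 1 := ⟨s - 1, by omega⟩
  rw [hc, decayWeight, Nat.add_sub_cancel, pow_succ (2 : ℝ)]
  ring

lemma abs_sigmaDeriv_le_weight (hs : Even s) (hs6 : 6 ≤ s) (hN : 2 * s ≤ N) {l : ℕ} (hl : l ≤ 3)
    {t : ℝ} (ht : 0 < t) (htpi : t ≤ π) :
    |sigmaDeriv s N l t| ≤ decayConst s l * ((N : ℝ) + 1) ^ l * decayWeight s N t := by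
  refine (abs_sigmaDeriv_le hs hs6 hl hN ht htpi).trans (le_of_eq ?_)
  rw [decayWeight]; ring

lemma halfCot_le_mul {t : ℝ} (ht : π / 2 ≤ ((N : ℝ) + 1) * t) (htpi : t ≤ π) :
    halfCot t ≤ 0.637 * ((N : ℝ) + 1) := by
  have hpi := Real.pi_gt_d4
  have hM : (0 : ℝ) < (N : ℝ) + 1 := by positivity
  have h0 : 0 < t := by
    by_contra! h
    have := mul_nonpos_of_nonneg_of_nonpos hM.le h
    linarith
  refine (halfCot_le_inv h0 htpi).trans ?_
  rw [inv_le_iff_one_le_mul₀ h0]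
  linarith

lemma rotAngle_pos_of_le (hω : π / 2 ≤ ((N : ℝ) + 1) * rotAngle z) : 0 < rotAngle z := by
  by_contra! h
  have := mul_nonpos_of_nonneg_of_nonpos (by positivity : (0 : ℝ) ≤ (N : ℝ) + 1) h
  linarith [Real.pi_pos]

lemma abs_sigmaT_le (hs : Even s) (hs6 : 6 ≤ s) (hN : 2 * s ≤ N)
    (hω : π / 2 ≤ ((N : ℝ) + 1) * rotAngle z) :
    |sigmaT s N (rotAngle z)| ≤
    cConst 0 s / (((N : ℝ) + 1) * rotAngle z) ^ s := by
  have h := abs_sigmaDeriv_le_weight hs hs6 hN (l := 0) (by norm_num) (rotAngle_pos_of_le hω)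
    (rotAngle_le_pi z)
  rw [sigmaDeriv_zero, pow_zero] at h
  rw [cConst_div_eq hs6 _ rfl]
  refine h.trans (le_of_eq ?_)
  rw [decayConst]; ring

lemma abs_zonalDeriv_le (hs : Even s) (hs6 : 6 ≤ s) (hN : 2 * s ≤ N) (hz : IsSO3 z)
    (hω : π / 2 ≤ ((N : ℝ) + 1) * rotAngle z) (n : Fin 3) :
    |zonalDeriv (sigmaPoly s N) n z| ≤
    cConst 1 s * ((N : ℝ) + 1) / (((N : ℝ) + 1) * rotAngle z) ^ s := by
  obtain ⟨e, he, hze⟩ := hz.exists_axisRot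
  have h := abs_sigmaDeriv_le_weight hs hs6 hN (l := 1) (by norm_num) (rotAngle_pos_of_le hω)
    (rotAngle_le_pi z)
  rw [mul_div_right_comm, cConst_div_eq hs6 _ rfl]
  conv_lhs => rw [hze]
  rw [zonalDeriv_axisRot n he, abs_mul]
  refine (mul_le_of_le_one_left (abs_nonneg _) (abs_axis_le he n)).trans (h.trans (le_of_eq ?_))
  rw [decayConst]; ring

lemma sigmaDeriv_bounds (hs : Even s) (hs6 : 6 ≤ s) (hN : 2 * s ≤ N)
    (hω : π / 2 ≤ ((N : ℝ) + 1) * rotAngle z) :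
    ∃ B ≥ 0, B = decayWeight s N (rotAngle z) ∧
    |sigmaDeriv s N 1 (rotAngle z)| ≤ 4 * s * ((N : ℝ) + 1) * B ∧
    |sigmaDeriv s N 2 (rotAngle z)| ≤ 7.26 * s * ((N : ℝ) + 1) ^ 2 * B ∧
    |sigmaDeriv s N 3 (rotAngle z)| ≤ 12.37 * s * ((N : ℝ) + 1) ^ 3 * B ∧
    |halfCot (rotAngle z) * sigmaDeriv s N 1 (rotAngle z)| ≤ 2.548 * s * ((N : ℝ) + 1) ^ 2 * B := by
  have h0 := rotAngle_pos_of_le hω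
  have hpi := rotAngle_le_pi z
  have h1 := abs_sigmaDeriv_le_weight hs hs6 hN (l := 1) (by norm_num) h0 hpi
  have h2 := abs_sigmaDeriv_le_weight hs hs6 hN (l := 2) (by norm_num) h0 hpi
  have h3 := abs_sigmaDeriv_le_weight hs hs6 hN (l := 3) (by norm_num) h0 hpi
  simp only [decayConst, pow_one] at h1 h2 h3
  refine ⟨_, decayWeight_nonneg h0.le, rfl, h1, h2, h3, ?_⟩
  rw [abs_mul, abs_of_nonneg (halfCot_nonneg h0 hpi)]
  refine (mul_le_mul (halfCot_le_mul hω hpi) h1 (abs_nonneg _) (by positivity)).trans (le_of_eq ?_)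
  ring

lemma abs_zonalDerivTwo_le (hs : Even s) (hs6 : 6 ≤ s) (hN : 2 * s ≤ N) (hz : IsSO3 z)
    (hω : π / 2 ≤ ((N : ℝ) + 1) * rotAngle z) (i n : Fin 3) :
    |zonalDerivTwo (sigmaPoly s N) i n z| ≤
    cConst 2 s * ((N : ℝ) + 1) ^ 2 / (((N : ℝ) + 1) * rotAngle z) ^ s := by
  have h0 := rotAngle_pos_of_le hω
  obtain ⟨e, he, hze⟩ := hz.exists_axisRot
  obtain ⟨B, hB, hBe, h1, h2, -, h4⟩ := sigmaDeriv_bounds hs hs6 hN hω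
  have hS : Real.sin (rotAngle z / 2) ≠ 0 :=
    (Real.sin_pos_of_pos_of_lt_pi (by linarith) (by linarith [rotAngle_le_pi z, Real.pi_pos])).ne'
  rw [mul_div_right_comm, cConst_div_eq hs6 _ rfl, ← hBe]
  conv_lhs => rw [hze]
  rw [zonalDerivTwo_axisRot i n he hS]
  generalize halfCot (rotAngle z) * sigmaDeriv s N 1 (rotAngle z) = k1 at *
  generalize sigmaDeriv s N 1 (rotAngle z) = F1 at *
  generalize sigmaDeriv s N 2 (rotAngle z) = F2 at *
  have hsR : (6 : ℝ) ≤ s := by exact_mod_cast hs6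
  have hNR : 2 * (s : ℝ) ≤ N := by exact_mod_cast hN
  have hMB : 0 ≤ ((N : ℝ) + 1) ^ 2 * B := by positivity
  have hsMB : 0 ≤ s * (((N : ℝ) + 1) ^ 2 * B) := by positivity
  by_cases hin : i = n
  · subst hin
    rw [crossMat_eq_zero_of_eq, if_pos rfl, show (F2 - k1) * (e i * e i) + k1 * 1 + F1 / 2 * 0 =
      F2 * e i ^ 2 + k1 * (1 - e i ^ 2) by ring]
    have e0 := sq_nonneg (e i)
    have e1 := sq_axis_le he i
    refine (abs_add_le _ _).trans ?_
    rw [abs_mul, abs_mul, abs_of_nonneg e0, abs_of_nonneg (sub_nonneg.mpr e1)]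
    have g1 := mul_le_mul_of_nonneg_right h2 e0
    have g2 := mul_le_mul_of_nonneg_right (h4.trans
      (by linarith : _ ≤ 7.26 * s * ((N : ℝ) + 1) ^ 2 * B)) (sub_nonneg.mpr e1)
    linarith
  · rw [if_neg hin, mul_zero, add_zero]
    refine (abs_add_le _ _).trans ?_
    rw [abs_mul, abs_mul (F1 / 2)]
    have g1 := mul_le_mul (abs_sub _ _ |>.trans (add_le_add h2 h4)) (abs_axis_mul_le he hin)
      (abs_nonneg _) (by positivity)
    have g2 := mul_le_of_le_one_right (abs_nonneg (F1 / 2)) (abs_crossMat_le he i n)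
    rw [abs_div, abs_two] at g2
    rw [abs_div, abs_two]
    have g3 : s * ((N : ℝ) + 1) * B * 2 ≤ ((N : ℝ) + 1) ^ 2 * B := by
      have : 0 ≤ ((N : ℝ) + 1) * B * (N + 1 - 2 * s) :=
        mul_nonneg (by positivity) (by linarith)
      linarith
    linarith

lemma abs_zonalDerivTwo_sub_le (hs : Even s) (hs6 : 6 ≤ s) (hN : 2 * s ≤ N) (hz : IsSO3 z)
    (hω : π / 2 ≤ ((N : ℝ) + 1) * rotAngle z) {i j n : Fin 3}
    (hij : i ≠ j) (hjn : j ≠ n) (hin : i ≠ n) :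
    |zonalDerivTwo (sigmaPoly s N) j i z - eps3 j i n / 2 * zonalDeriv (sigmaPoly s N) n z| ≤
    cConst 2 s * ((N : ℝ) + 1) ^ 2 / (((N : ℝ) + 1) * rotAngle z) ^ s := by
  have h0 := rotAngle_pos_of_le hω
  obtain ⟨e, he, hze⟩ := hz.exists_axisRot
  obtain ⟨B, hB, hBe, h1, h2, -, h4⟩ := sigmaDeriv_bounds hs hs6 hN hω
  have hS : Real.sin (rotAngle z / 2) ≠ 0 :=
    (Real.sin_pos_of_pos_of_lt_pi (by linarith) (by linarith [rotAngle_le_pi z, Real.pi_pos])).ne'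
  rw [mul_div_right_comm, cConst_div_eq hs6 _ rfl, ← hBe]
  conv_lhs => rw [hze]
  have hcr : crossMat e j i = eps3 j i n * e n := by
    fin_cases i <;> fin_cases j <;> fin_cases n <;> simp at hij hjn hin <;>
      simp [crossMat, eps3]
  rw [zonalDerivTwo_axisRot j i he hS, zonalDeriv_axisRot n he, hcr, if_neg (Ne.symm hij)]
  generalize halfCot (rotAngle z) * sigmaDeriv s N 1 (rotAngle z) = k1 at *
  generalize sigmaDeriv s N 1 (rotAngle z) = F1 at *
  generalize sigmaDeriv s N 2 (rotAngle z) = F2 at *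
  rw [show (F2 - k1) * (e j * e i) + k1 * 0 + F1 / 2 * (eps3 j i n * e n) -
    eps3 j i n / 2 * (e n * F1) = (F2 - k1) * (e j * e i) by ring, abs_mul]
  have g1 := mul_le_mul (abs_sub _ _ |>.trans (add_le_add h2 h4)) (abs_axis_mul_le he hij.symm)
      (abs_nonneg _) (by positivity)
  have hMB : 0 ≤ ((N : ℝ) + 1) ^ 2 * B := by positivity
  have hsMB : 0 ≤ s * (((N : ℝ) + 1) ^ 2 * B) := by positivity
  linarith

lemma abs_zonalDerivThree_sub_le (hs : Even s) (hs6 : 6 ≤ s) (hN : 2 * s ≤ N) (hz : IsSO3 z)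
    (hω : π / 2 ≤ ((N : ℝ) + 1) * rotAngle z) (j i k : Fin 3) :
    |zonalDerivThree (sigmaPoly s N) j i k z -
      (∑ n, eps3 j i n * zonalDerivTwo (sigmaPoly s N) n k z) / 2| ≤
    1.2 * cConst 3 s * ((N : ℝ) + 1) ^ 3 / (((N : ℝ) + 1) * rotAngle z) ^ s := by
  have h0 := rotAngle_pos_of_le hω
  obtain ⟨e, he, hze⟩ := hz.exists_axisRot
  obtain ⟨B, hB, hBe, h1, h2, h3, h4⟩ := sigmaDeriv_bounds hs hs6 hN hω
  have hS : Real.sin (rotAngle z / 2) ≠ 0 :=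
    (Real.sin_pos_of_pos_of_lt_pi (by linarith) (by linarith [rotAngle_le_pi z, Real.pi_pos])).ne'
  rw [mul_div_right_comm, mul_div_assoc, cConst_div_eq hs6 _ rfl, ← hBe]
  conv_lhs => rw [hze]
  rw [zonalDerivThree_axisRot j i k he hS]
  have hk := halfCot_le_mul hω (rotAngle_le_pi z)
  have hk0 := halfCot_nonneg h0 (rotAngle_le_pi z)
  have b1 := abs_axis_cube_le he j i k
  have b2 := abs_axis_harmonic_le he j i k
  have b3 := abs_axis_cube_sub_le he j i k
  have b4 := abs_crossMat_mul_add_le he j i k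
  have hG := (abs_sub (sigmaDeriv s N 2 (rotAngle z))
    (halfCot (rotAngle z) * sigmaDeriv s N 1 (rotAngle z))).trans (add_le_add h2 h4)
  generalize sigmaDeriv s N 2 (rotAngle z) -
    halfCot (rotAngle z) * sigmaDeriv s N 1 (rotAngle z) = G at *
  generalize sigmaDeriv s N 1 (rotAngle z) = F1 at *
  generalize sigmaDeriv s N 3 (rotAngle z) = F3 at *
  generalize halfCot (rotAngle z) = κ at *
  generalize e j * e i * e k - (if j = i then e k else 0) = E3 at *
  generalize 3 * (e j * e i * e k) - _ = E2 at *
  generalize e j * e i * e k = E1 at *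
  generalize crossMat e j k * e i + crossMat e i k * e j = E4 at *
  have hsR : (6 : ℝ) ≤ s := by exact_mod_cast hs6
  have hNR : 2 * (s : ℝ) ≤ N := by exact_mod_cast hN
  have hMB : 0 ≤ ((N : ℝ) + 1) ^ 3 * B := by positivity
  have hsMB : 0 ≤ (s - 6) * (((N : ℝ) + 1) ^ 3 * B) := mul_nonneg (by linarith) hMB
  have t1 : |F3 * E1| ≤ 12.37 * s * ((N : ℝ) + 1) ^ 3 * B := by
    rw [abs_mul]; exact (mul_le_of_le_one_right (abs_nonneg _) b1).trans h3
  have t2 : |κ * G * E2| ≤ (0.637 * ((N : ℝ) + 1)) *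
      (7.26 * s * ((N : ℝ) + 1) ^ 2 * B + 2.548 * s * ((N : ℝ) + 1) ^ 2 * B) * 1.2 := by
    rw [abs_mul, abs_mul, abs_of_nonneg hk0]
    exact mul_le_mul (mul_le_mul hk hG (abs_nonneg _) (by positivity)) b2 (abs_nonneg _)
      (by positivity)
  have t3 : |F1 / 4 * E3| ≤ 4 * s * ((N : ℝ) + 1) * B / 4 := by
    rw [abs_mul, abs_div, abs_of_pos (by norm_num : (0 : ℝ) < 4)]
    exact (mul_le_of_le_one_right (by positivity) b3).trans (by linarith)
  have t4 : |G / 2 * E4| ≤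
      (7.26 * s * ((N : ℝ) + 1) ^ 2 * B + 2.548 * s * ((N : ℝ) + 1) ^ 2 * B) / 2 := by
    rw [abs_mul, abs_div, abs_two]
    exact (mul_le_of_le_one_right (by positivity) b4).trans (by linarith)
  have hM13 : 0 ≤ (N : ℝ) + 1 - 13 := by linarith
  have m2 : 2 * s * ((N : ℝ) + 1) ^ 2 * B ≤ ((N : ℝ) + 1) ^ 3 * B := by
    have : 0 ≤ ((N : ℝ) + 1) ^ 2 * B * (N + 1 - 2 * s) := mul_nonneg (by positivity) (by linarith)
    linarith
  have m1 : 26 * s * ((N : ℝ) + 1) * B ≤ ((N : ℝ) + 1) ^ 3 * B := by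
    have : 0 ≤ ((N : ℝ) + 1) * B * 2 * s * (N + 1 - 13) := mul_nonneg (by positivity) (by linarith)
    linarith
  refine (abs_add_le _ _).trans ((add_le_add (abs_add_le _ _) le_rfl).trans ?_)
  have := abs_sub (F3 * E1) (κ * G * E2)
  linarith

end

lemma sin_div_le_sin_div {x y : ℝ} (hx : 0 < x) (hxy : x ≤ y) (hy : y ≤ π) :
    Real.sin y / y ≤ Real.sin x / x := by
  have hy0 : 0 < y := hx.trans_le hxy
  have h := strictConcaveOn_sin_Icc.concaveOn.2 (⟨le_rfl, Real.pi_pos.le⟩ : (0 : ℝ) ∈ Set.Icc 0 π)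
    (⟨hy0.le, hy⟩ : y ∈ Set.Icc 0 π) (sub_nonneg.mpr ((div_le_one hy0).mpr hxy))
    (by positivity : 0 ≤ x / y) (by ring)
  simp only [smul_eq_mul, Real.sin_zero, mul_zero, zero_add, div_mul_cancel₀ _ hy0.ne'] at h
  rw [div_le_div_iff₀ hy0 hx]
  have h2 := mul_le_mul_of_nonneg_right h hy0.le
  rw [mul_right_comm, div_mul_cancel₀ _ hy0.ne'] at h2
  linarith

lemma convexOn_cos_sqrt : ConvexOn ℝ (Set.Icc 0 (π ^ 2)) (fun w => Real.cos √w) := by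
  have hd : ∀ w : ℝ, 0 < w →
      HasDerivAt (fun w => Real.cos √w) (-(Real.sin √w / √w) / 2) w := by
    intro w hw
    have h := (Real.hasDerivAt_sqrt hw.ne').cos
    have h0 := Real.sqrt_pos.mpr hw
    convert h using 1
    field_simp
  refine MonotoneOn.convexOn_of_deriv (convex_Icc _ _)
    (Real.continuous_cos.comp Real.continuous_sqrt).continuousOn ?_ ?_ <;> rw [interior_Icc]
  · exact fun w hw => (hd w hw.1).differentiableAt.differentiableWithinAt
  · intro w hw w' hw' hle
    rw [(hd w hw.1).deriv, (hd w' hw'.1).deriv]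
    have h2 : √w' ≤ π := (Real.sqrt_le_left Real.pi_pos.le).mpr hw'.2.le
    have := sin_div_le_sin_div (Real.sqrt_pos.mpr hw.1) (Real.sqrt_le_sqrt hle) h2
    linarith

/-- Comparison of the spherical and the Euclidean law of cosines. -/
lemma cos_sqrt_le {A B c : ℝ} (hA : 0 ≤ A) (hA' : A ≤ π / 2) (hB : 0 ≤ B) (hB' : B ≤ π / 2)
    (hc : |c| ≤ 1) :
    Real.cos √(A ^ 2 + B ^ 2 - 2 * A * B * c) ≤
      Real.cos A * Real.cos B + Real.sin A * Real.sin B * c := by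
  obtain ⟨hc1, hc2⟩ := abs_le.mp hc
  have hpi := Real.pi_pos
  have h1 : (A - B) ^ 2 ∈ Set.Icc 0 (π ^ 2) :=
    ⟨sq_nonneg _, sq_le_sq' (by linarith) (by linarith)⟩
  have h2 : (A + B) ^ 2 ∈ Set.Icc 0 (π ^ 2) :=
    ⟨sq_nonneg _, sq_le_sq' (by linarith) (by linarith)⟩
  have h := convexOn_cos_sqrt.2 h1 h2 (by linarith : 0 ≤ (1 + c) / 2)
    (by linarith : 0 ≤ (1 - c) / 2) (by ring)
  simp only [smul_eq_mul, Real.sqrt_sq_eq_abs, Real.cos_abs, Real.cos_sub, Real.cos_add] at h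
  rw [show (1 + c) / 2 * (A - B) ^ 2 + (1 - c) / 2 * (A + B) ^ 2 =
    A ^ 2 + B ^ 2 - 2 * A * B * c by ring] at h
  linarith

lemma trace_quatMat_mul_transpose (a b : ℝ) (v w : Fin 3 → ℝ) :
    Matrix.trace (quatMat a v * (quatMat b w).transpose) =
      4 * (a * b + v 0 * w 0 + v 1 * w 1 + v 2 * w 2) ^ 2 -
        (a ^ 2 + v 0 ^ 2 + v 1 ^ 2 + v 2 ^ 2) * (b ^ 2 + w 0 ^ 2 + w 1 ^ 2 + w 2 ^ 2) := by
  simp only [Matrix.trace, Matrix.diag, Matrix.mul_apply, Matrix.transpose_apply,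
    Fin.sum_univ_three]
  simp [quatMat]
  ring

lemma rotAngle_axisRot_mul_transpose_le {t u : ℝ} {e f : Fin 3 → ℝ} (ht : 0 ≤ t) (ht' : t ≤ π)
    (hu : 0 ≤ u) (hu' : u ≤ π) (he : e 0 ^ 2 + e 1 ^ 2 + e 2 ^ 2 = 1)
    (hf : f 0 ^ 2 + f 1 ^ 2 + f 2 ^ 2 = 1) :
    rotAngle (axisRot t e * (axisRot u f).transpose) ≤
      √((t * e 0 - u * f 0) ^ 2 + (t * e 1 - u * f 1) ^ 2 + (t * e 2 - u * f 2) ^ 2) := by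
  set c := e 0 * f 0 + e 1 * f 1 + e 2 * f 2 with hcdef
  have hc : |c| ≤ 1 := by
    rw [abs_le]
    constructor
    · nlinarith [sq_nonneg (e 0 + f 0), sq_nonneg (e 1 + f 1), sq_nonneg (e 2 + f 2)]
    · nlinarith [sq_nonneg (e 0 - f 0), sq_nonneg (e 1 - f 1), sq_nonneg (e 2 - f 2)]
  have hW : (t * e 0 - u * f 0) ^ 2 + (t * e 1 - u * f 1) ^ 2 + (t * e 2 - u * f 2) ^ 2 =
      2 ^ 2 * ((t / 2) ^ 2 + (u / 2) ^ 2 - 2 * (t / 2) * (u / 2) * c) := by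
    rw [hcdef]; linear_combination t ^ 2 * he + u ^ 2 * hf
  have hcos := cos_sqrt_le (A := t / 2) (B := u / 2) (by linarith) (by linarith) (by linarith)
    (by linarith) hc
  rw [hW, Real.sqrt_mul (by norm_num), Real.sqrt_sq (by norm_num)]
  set r := √((t / 2) ^ 2 + (u / 2) ^ 2 - 2 * (t / 2) * (u / 2) * c)
  have hr : 0 ≤ r := Real.sqrt_nonneg _
  rcases le_total π (2 * r) with h | h
  · exact (rotAngle_le_pi _).trans h
  have hr0 : 0 ≤ Real.cos r :=
    Real.cos_nonneg_of_neg_pi_div_two_le_of_le (by linarith [Real.pi_pos]) (by linarith)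
  have htr : (Matrix.trace (axisRot t e * (axisRot u f).transpose) - 1) / 2 =
      2 * (Real.cos (t / 2) * Real.cos (u / 2) + Real.sin (t / 2) * Real.sin (u / 2) * c) ^ 2 - 1 := by
    have h1 := Real.cos_sq_add_sin_sq (t / 2)
    have h2 := Real.cos_sq_add_sin_sq (u / 2)
    rw [axisRot, axisRot, trace_quatMat_mul_transpose]
    have h3 : Real.cos (t / 2) ^ 2 + (Real.sin (t / 2) * e 0) ^ 2 + (Real.sin (t / 2) * e 1) ^ 2 +
        (Real.sin (t / 2) * e 2) ^ 2 = 1 := by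
      linear_combination h1 + Real.sin (t / 2) ^ 2 * he
    have h4 : Real.cos (u / 2) ^ 2 + (Real.sin (u / 2) * f 0) ^ 2 + (Real.sin (u / 2) * f 1) ^ 2 +
        (Real.sin (u / 2) * f 2) ^ 2 = 1 := by
      linear_combination h2 + Real.sin (u / 2) ^ 2 * hf
    rw [h3, h4, hcdef]
    ring
  rw [rotAngle, htr, ← Real.arccos_cos (by linarith : 0 ≤ 2 * r) h]
  refine Real.arccos_le_arccos ?_
  rw [Real.cos_two_mul]
  have := pow_le_pow_left₀ hr0 hcos 2
  linarith

lemma exists_logChart {x : Mat3} (hx : IsSO3 x) :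
    ∃ u : Mat3 → EuclideanSpace ℝ (Fin 3), (∀ p, IsSO3 p → ‖u p‖ = rotAngle (p⁻¹ * x)) ∧
      ∀ p q, IsSO3 p → IsSO3 q → rotAngle (q⁻¹ * p) ≤ dist (u p) (u q) := by
  have h : ∀ p : Mat3, ∃ e : Fin 3 → ℝ, IsSO3 p → e 0 ^ 2 + e 1 ^ 2 + e 2 ^ 2 = 1 ∧
      p.transpose * x = axisRot (rotAngle (p.transpose * x)) e := by
    intro p
    by_cases hp : IsSO3 p
    · obtain ⟨e, he⟩ := (hp.transpose.mul hx).exists_axisRot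
      exact ⟨e, fun _ => he⟩
    · exact ⟨0, fun h => absurd h hp⟩
  choose e he using h
  refine ⟨fun p => WithLp.toLp 2 (fun m => rotAngle (p.transpose * x) * e p m), ?_, ?_⟩
  · intro p hp
    rw [hp.inv_eq, EuclideanSpace.norm_eq, ← Real.sqrt_sq (rotAngle_nonneg (p.transpose * x))]
    congr 1
    simp only [Fin.sum_univ_three, Real.norm_eq_abs, sq_abs]
    linear_combination rotAngle (p.transpose * x) ^ 2 * (he p hp).1
  · intro p q hp hq
    have h1 : q⁻¹ * p = q.transpose * x * (p.transpose * x).transpose := by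
      rw [hq.inv_eq, Matrix.transpose_mul, Matrix.transpose_transpose, Matrix.mul_assoc,
        ← Matrix.mul_assoc x, hx.mul_transpose_self, Matrix.one_mul]
    rw [h1, dist_comm, EuclideanSpace.dist_eq]
    simp only [Fin.sum_univ_three, Real.dist_eq, sq_abs]
    have h2 := rotAngle_axisRot_mul_transpose_le (rotAngle_nonneg (q.transpose * x))
      (rotAngle_le_pi _) (rotAngle_nonneg (p.transpose * x)) (rotAngle_le_pi _) (he q hq).1
      (he p hp).1
    rwa [← (he q hq).2, ← (he p hp).2] at h2

section packing

variable {ι : Type*} {P : Finset ι} {f : ι → EuclideanSpace ℝ (Fin 3)} {δ : ℝ}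

/-- Volume bound for the number of separated points in an annulus. -/
lemma card_mul_le_of_separated (hδ : 0 < δ)
    (hsep : ∀ p ∈ P, ∀ q ∈ P, p ≠ q → δ ≤ dist (f p) (f q)) {r R : ℝ} (hr : 0 ≤ r) (hrR : r ≤ R)
    (c : EuclideanSpace ℝ (Fin 3)) (hPr : ∀ p ∈ P, r + δ / 2 ≤ dist (f p) c ∨ r = 0)
    (hPR : ∀ p ∈ P, dist (f p) c ≤ R) :
    P.card * (δ / 2) ^ 3 + r ^ 3 ≤ (R + δ / 2) ^ 3 := by
  set μ : Measure (EuclideanSpace ℝ (Fin 3)) := volume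
  have hvol : ∀ (x : EuclideanSpace ℝ (Fin 3)) (ρ : ℝ), 0 ≤ ρ →
      μ.real (Metric.ball x ρ) = ρ ^ 3 * μ.real (Metric.ball 0 1) := by
    intro x ρ hρ
    rw [Measure.real, Measure.addHaar_ball μ x hρ, finrank_euclideanSpace_fin, ENNReal.toReal_mul,
      ENNReal.toReal_ofReal (by positivity), Measure.real]
  have hpos : 0 < μ.real (Metric.ball (0 : EuclideanSpace ℝ (Fin 3)) 1) :=
    ENNReal.toReal_pos (Metric.measure_ball_pos μ _ one_pos).ne' measure_ball_lt_top.ne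
  have hdisj : (P : Set ι).PairwiseDisjoint (fun p => Metric.ball (f p) (δ / 2)) := by
    intro p hp q hq hpq
    exact Metric.ball_disjoint_ball (by rw [add_halves]; exact hsep p hp q hq hpq)
  have hun : μ.real (⋃ p ∈ P, Metric.ball (f p) (δ / 2)) =
      P.card * (δ / 2) ^ 3 * μ.real (Metric.ball 0 1) := by
    rw [measureReal_biUnion_finset hdisj (fun _ _ => measurableSet_ball)
      (fun _ _ => measure_ball_lt_top.ne)]
    simp_rw [hvol _ _ (by positivity : 0 ≤ δ / 2)]
    rw [Finset.sum_const, nsmul_eq_mul, mul_assoc]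
  have hdisj2 : Disjoint (⋃ p ∈ P, Metric.ball (f p) (δ / 2)) (Metric.ball c r) := by
    simp only [Set.disjoint_iUnion_left]
    intro p hp
    rcases hPr p hp with h | h
    · exact Metric.ball_disjoint_ball (by linarith)
    · rw [h, Metric.ball_zero]; exact Set.disjoint_empty _
  have hsub : (⋃ p ∈ P, Metric.ball (f p) (δ / 2)) ∪ Metric.ball c r ⊆
      Metric.ball c (R + δ / 2) := by
    refine Set.union_subset (Set.iUnion₂_subset fun p hp => ?_)
      (Metric.ball_subset_ball (by linarith))
    exact Metric.ball_subset_ball' (by linarith [hPR p hp])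
  have hle := measureReal_mono (μ := μ) hsub measure_ball_lt_top.ne
  rw [measureReal_union hdisj2 measurableSet_ball ((measure_mono
      (Set.subset_union_left.trans hsub)).trans_lt measure_ball_lt_top).ne measure_ball_lt_top.ne, hun,
    hvol _ _ hr, hvol _ _ (by linarith : 0 ≤ R + δ / 2), ← add_mul] at hle
  exact le_of_mul_le_mul_right hle hpos

lemma card_le_of_annulus (hδ : 0 < δ)
    (hsep : ∀ p ∈ P, ∀ q ∈ P, p ≠ q → δ ≤ dist (f p) (f q)) (c : EuclideanSpace ℝ (Fin 3)) (m : ℕ)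
    (hP : ∀ p ∈ P, ⌊dist (f p) c / δ⌋₊ = m + 1) : (P.card : ℝ) ≤ 124 * ((m : ℝ) + 1) ^ 2 := by
  have hb : ∀ p ∈ P, ((m : ℝ) + 1) * δ ≤ dist (f p) c ∧ dist (f p) c ≤ ((m : ℝ) + 2) * δ := by
    intro p hp
    have h1 := (Nat.floor_eq_iff (by positivity)).mp (hP p hp)
    push_cast at h1
    rw [le_div_iff₀ hδ, div_lt_iff₀ hδ] at h1
    exact ⟨h1.1, by linarith [h1.2]⟩
  have h := card_mul_le_of_separated hδ hsep (r := (m + 1 / 2) * δ) (R := (m + 2) * δ)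
    (by positivity) (by gcongr; norm_num) c (fun p hp => Or.inl (by linarith [(hb p hp).1]))
    (fun p hp => (hb p hp).2)
  have h2 : ((P.card : ℝ) / 8 + (m + 1 / 2) ^ 3) * δ ^ 3 ≤ (m + 5 / 2) ^ 3 * δ ^ 3 := by
    linarith
  have h3 := le_of_mul_le_mul_right h2 (by positivity)
  have hm : (0 : ℝ) ≤ m := Nat.cast_nonneg m
  nlinarith

lemma summable_one_div_succ_pow {k : ℕ} (hk : 2 ≤ k) :
    Summable (fun n : ℕ => (1 : ℝ) / ((n : ℝ) + 1) ^ k) := by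
  have h := (summable_nat_add_iff 1).mpr (Real.summable_one_div_nat_pow.mpr (by omega : 1 < k))
  simpa using h

lemma one_le_zetaNat {k : ℕ} (hk : 2 ≤ k) : 1 ≤ zetaNat k := by
  have h := (summable_one_div_succ_pow hk).sum_le_tsum {0} (fun _ _ => by positivity)
  simpa [zetaNat] using h

lemma sum_inv_floor_pow_le {s : ℕ} (hs : 4 ≤ s) (hδ : 0 < δ)
    (hsep : ∀ p ∈ P, ∀ q ∈ P, p ≠ q → δ ≤ dist (f p) (f q)) (c : EuclideanSpace ℝ (Fin 3))
    (hP : ∀ p ∈ P, δ ≤ dist (f p) c) :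
    ∑ p ∈ P, 1 / (⌊dist (f p) c / δ⌋₊ : ℝ) ^ s ≤ 124 * zetaNat (s - 2) := by
  classical
  set g : ι → ℕ := fun p => ⌊dist (f p) c / δ⌋₊ - 1
  have hg : ∀ p ∈ P, ⌊dist (f p) c / δ⌋₊ = g p + 1 := by
    intro p hp
    have : 1 ≤ ⌊dist (f p) c / δ⌋₊ := by
      rw [Nat.one_le_floor_iff, le_div_iff₀ hδ, one_mul]; exact hP p hp
    simp only [g]; omega
  rw [← Finset.sum_fiberwise_of_maps_to (g := g) (t := P.image g)
    (fun p hp => Finset.mem_image_of_mem g hp)]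
  calc ∑ m ∈ P.image g, ∑ p ∈ P with g p = m, 1 / (⌊dist (f p) c / δ⌋₊ : ℝ) ^ s
      ≤ ∑ m ∈ P.image g, 124 * (1 / ((m : ℝ) + 1) ^ (s - 2)) := by
        refine Finset.sum_le_sum fun m _ => ?_
        have hcard := card_le_of_annulus (P := P.filter (g · = m)) hδ
          (fun p hp q hq => hsep p (Finset.mem_filter.mp hp).1 q (Finset.mem_filter.mp hq).1) c m
          (fun p hp => by rw [hg p (Finset.mem_filter.mp hp).1, (Finset.mem_filter.mp hp).2])
        have heq : ∀ p ∈ P.filter (g · = m), 1 / (⌊dist (f p) c / δ⌋₊ : ℝ) ^ s =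
            1 / ((m : ℝ) + 1) ^ s := by
          intro p hp
          rw [hg p (Finset.mem_filter.mp hp).1, (Finset.mem_filter.mp hp).2]
          push_cast; rfl
        rw [Finset.sum_congr rfl heq, Finset.sum_const, nsmul_eq_mul]
        refine (mul_le_mul_of_nonneg_right hcard (by positivity)).trans (le_of_eq ?_)
        obtain ⟨k, rfl⟩ : ∃ k, s = k + 2 := ⟨s - 2, by omega⟩
        rw [Nat.add_sub_cancel, pow_add]
        field_simp
    _ ≤ 124 * zetaNat (s - 2) := by
        rw [← Finset.mul_sum]
        exact mul_le_mul_of_nonneg_left ((summable_one_div_succ_pow (by omega)).sum_le_tsum _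
          (fun _ _ => by positivity)) (by norm_num)

/-- Lattice-type sum bound for separated points, one of which is close to the origin. -/
lemma sum_inv_norm_pow_le [DecidableEq ι] {s : ℕ} (hs : 4 ≤ s) (hδ : 0 < δ)
    (hsep : ∀ p ∈ P, ∀ q ∈ P, p ≠ q → δ ≤ dist (f p) (f q)) {j : ι} (hj : j ∈ P) {ε : ℝ}
    (hε0 : 0 ≤ ε) (hε : ε ≤ 1 / 2) (hfj : ‖f j‖ ≤ ε * δ) :
    ∑ p ∈ P.erase j, 1 / ‖f p‖ ^ s ≤
      124 * zetaNat (s - 2) * min ((27 / 124) * ((1 - ε) ^ s)⁻¹ + 1) (((1 - ε) ^ s)⁻¹) / δ ^ s := by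
  have hsep' : ∀ p ∈ P.erase j, ∀ q ∈ P.erase j, p ≠ q → δ ≤ dist (f p) (f q) :=
    fun p hp q hq => hsep p (Finset.mem_of_mem_erase hp) q (Finset.mem_of_mem_erase hq)
  have hdist : ∀ p ∈ P.erase j, δ ≤ dist (f p) (f j) := fun p hp =>
    hsep p (Finset.mem_of_mem_erase hp) j hj (Finset.ne_of_mem_erase hp)
  have hnorm : ∀ p, dist (f p) (f j) - ε * δ ≤ ‖f p‖ := by
    intro p
    have := norm_sub_le (f p) (f j)
    rw [dist_eq_norm]; linarith
  have hε1 : 0 < 1 - ε := by linarith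
  have hζ := one_le_zetaNat (k := s - 2) (by omega)
  rw [mul_min_of_nonneg _ _ (by positivity), ← min_div_div_right (by positivity), le_min_iff]
  constructor
  · rw [← Finset.sum_filter_add_sum_filter_not _ (fun p => ‖f p‖ < δ)]
    have hcard : (((P.erase j).filter (fun p => ‖f p‖ < δ)).card : ℝ) ≤ 27 := by
      have h := card_mul_le_of_separated (P := (P.erase j).filter (fun p => ‖f p‖ < δ)) hδ
        (fun p hp q hq => hsep' p (Finset.mem_filter.mp hp).1 q (Finset.mem_filter.mp hq).1)
        le_rfl hδ.le 0 (fun _ _ => Or.inr rfl)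
        (fun p hp => by rw [dist_zero_right]; exact (Finset.mem_filter.mp hp).2.le)
      have h2 : ((((P.erase j).filter (fun p => ‖f p‖ < δ)).card : ℝ)) * δ ^ 3 ≤ 27 * δ ^ 3 := by
        linarith
      exact le_of_mul_le_mul_right h2 (by positivity)
    have h1 : ∑ p ∈ P.erase j with ‖f p‖ < δ, 1 / ‖f p‖ ^ s ≤ 27 * (1 / ((1 - ε) * δ) ^ s) := by
      refine (Finset.sum_le_card_nsmul _ _ (1 / ((1 - ε) * δ) ^ s) fun p hp => ?_).trans ?_
      · have : (1 - ε) * δ ≤ ‖f p‖ := by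
          linarith [hnorm p, hdist p (Finset.mem_filter.mp hp).1]
        gcongr
      · rw [nsmul_eq_mul]; gcongr
    have h2 : ∑ p ∈ P.erase j with ¬‖f p‖ < δ, 1 / ‖f p‖ ^ s ≤
        124 * zetaNat (s - 2) * (1 / δ ^ s) := by
      have h := sum_inv_floor_pow_le (P := (P.erase j).filter (fun p => ¬‖f p‖ < δ)) hs hδ
        (fun p hp q hq => hsep' p (Finset.mem_filter.mp hp).1 q (Finset.mem_filter.mp hq).1) 0
        (fun p hp => by rw [dist_zero_right]; exact not_lt.mp (Finset.mem_filter.mp hp).2)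
      refine le_trans ?_ (mul_le_mul_of_nonneg_right h (by positivity : 0 ≤ 1 / δ ^ s))
      rw [Finset.sum_mul]
      refine Finset.sum_le_sum fun p hp => ?_
      have hp := not_lt.mp (Finset.mem_filter.mp hp).2
      rw [dist_zero_right, div_mul_div_comm, one_mul, ← mul_pow]
      have h1 : 1 ≤ ⌊‖f p‖ / δ⌋₊ := by
        rw [Nat.one_le_floor_iff, le_div_iff₀ hδ, one_mul]; exact hp
      have h2 : (0 : ℝ) < ⌊‖f p‖ / δ⌋₊ := by exact_mod_cast h1
      have h3 := Nat.floor_le (by positivity : 0 ≤ ‖f p‖ / δ)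
      rw [le_div_iff₀ hδ] at h3
      gcongr
    refine (add_le_add h1 h2).trans ?_
    have h3 : 27 * (1 / ((1 - ε) * δ) ^ s) ≤ zetaNat (s - 2) * (27 * (1 / ((1 - ε) * δ) ^ s)) :=
      le_mul_of_one_le_left (by positivity) hζ
    refine (add_le_add h3 le_rfl).trans (le_of_eq ?_)
    rw [mul_pow]
    field_simp
  · have h := sum_inv_floor_pow_le hs hδ hsep' (f j) hdist
    have h2 := mul_le_mul_of_nonneg_right h (by positivity : 0 ≤ 1 / ((1 - ε) * δ) ^ s)
    refine le_trans ?_ (h2.trans (le_of_eq ?_))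
    · rw [Finset.sum_mul]
      refine Finset.sum_le_sum fun p hp => ?_
      rw [div_mul_div_comm, one_mul, ← mul_pow]
      have h1 : 1 ≤ ⌊dist (f p) (f j) / δ⌋₊ := by
        rw [Nat.one_le_floor_iff, le_div_iff₀ hδ, one_mul]; exact hdist p hp
      have h1R : (1 : ℝ) ≤ ⌊dist (f p) (f j) / δ⌋₊ := by exact_mod_cast h1
      have h3 := Nat.floor_le (by positivity : 0 ≤ dist (f p) (f j) / δ)
      rw [le_div_iff₀ hδ] at h3
      have h4 : (⌊dist (f p) (f j) / δ⌋₊ : ℝ) * ((1 - ε) * δ) ≤ ‖f p‖ := by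
        have := mul_le_mul_of_nonneg_right h1R (by positivity : 0 ≤ ε * δ)
        linarith [hnorm p]
      gcongr
    · rw [mul_pow]
      field_simp

end packing

lemma cConst_nonneg {l s : ℕ} (hs : 6 ≤ s) : 0 ≤ cConst l s := by
  have hsR : (6 : ℝ) ≤ s := by exact_mod_cast hs
  rcases l with _ | _ | _ | l <;> simp only [cConst] <;>
    refine mul_nonneg (by positivity) (by linarith)

lemma eps3_self (i n : Fin 3) : eps3 i i n = 0 := by
  fin_cases i <;> fin_cases n <;> simp [eps3]

lemma sum_eps3_mul {i j n : Fin 3} (hij : i ≠ j) (hjn : j ≠ n) (hin : i ≠ n) (h : Fin 3 → ℝ) :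
    ∑ m, eps3 j i m * h m = eps3 j i n * h n := by
  refine Fintype.sum_eq_single n fun m hm => ?_
  have : eps3 j i m = 0 := by
    fin_cases i <;> fin_cases j <;> fin_cases n <;> fin_cases m <;>
      simp at hij hjn hin hm <;> simp [eps3]
  rw [this, zero_mul]

/-- Summation of a pointwise decay bound over a separated set in the rotation group. -/
lemma sum_abs_le_of_decay {s N : ℕ} (hs : 6 ≤ s) {ν : ℝ} (hν : π ≤ ν) {C : Finset Mat3}
    (hC : ∀ p ∈ C, IsSO3 p)
    (hsep : ∀ p ∈ C, ∀ q ∈ C, p ≠ q → ν / ((N : ℝ) + 1) ≤ rotAngle (q⁻¹ * p))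
    {xj : Mat3} (hxj : xj ∈ C) {ε : ℝ} (hε0 : 0 ≤ ε) (hε : ε ≤ 1 / 2)
    {x : Mat3} (hx : IsSO3 x) (hxd : rotAngle (xj⁻¹ * x) ≤ ε * ν / ((N : ℝ) + 1))
    {g : Mat3 → ℝ} {c : ℝ} (hc : 0 ≤ c)
    (hg : ∀ p, IsSO3 p → π / 2 ≤ ((N : ℝ) + 1) * rotAngle (p.transpose * x) →
      |g p| ≤ c / (((N : ℝ) + 1) * rotAngle (p.transpose * x)) ^ s) :
    ∑ p ∈ C.erase xj, |g p| ≤ 124 * c * zetaNat (s - 2) *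
      min ((27 / 124) * ((1 - ε) ^ s)⁻¹ + 1) (((1 - ε) ^ s)⁻¹) / ν ^ s := by
  obtain ⟨u, hu, hdu⟩ := exists_logChart hx
  have hν0 : 0 < ν := Real.pi_pos.trans_le hν
  have hM : (0 : ℝ) < (N : ℝ) + 1 := by positivity
  have hsepu : ∀ p ∈ C, ∀ q ∈ C, p ≠ q → ν / ((N : ℝ) + 1) ≤ dist (u p) (u q) :=
    fun p hp q hq hpq => (hsep p hp q hq hpq).trans (hdu p q (hC p hp) (hC q hq))
  have hj : ‖u xj‖ ≤ ε * (ν / ((N : ℝ) + 1)) := by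
    rw [hu xj (hC xj hxj), ← mul_div_assoc]; exact hxd
  have hpack := sum_inv_norm_pow_le (by omega : 4 ≤ s) (by positivity) hsepu hxj hε0 hε hj
  have hterm : ∀ p ∈ C.erase xj, |g p| ≤ c / ((N : ℝ) + 1) ^ s * (1 / ‖u p‖ ^ s) := by
    intro p hp
    have hpC := Finset.mem_of_mem_erase hp
    have hup : rotAngle (p.transpose * x) = ‖u p‖ := by
      rw [hu p (hC p hpC), (hC p hpC).inv_eq]
    have h1 := hsepu p hpC xj hxj (Finset.ne_of_mem_erase hp)
    rw [dist_eq_norm] at h1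
    have h2 := norm_sub_le (u p) (u xj)
    have h3 : ε * (ν / ((N : ℝ) + 1)) ≤ 1 / 2 * (ν / ((N : ℝ) + 1)) := by gcongr
    have h4 : 1 / 2 * (ν / ((N : ℝ) + 1)) ≤ ‖u p‖ := by linarith
    have h5 := hg p (hC p hpC)
    rw [hup] at h5
    refine (h5 ?_).trans (le_of_eq ?_)
    · have := mul_le_mul_of_nonneg_left h4 hM.le
      rw [show ((N : ℝ) + 1) * (1 / 2 * (ν / ((N : ℝ) + 1))) = ν / 2 by field_simp] at this
      linarith
    · rw [mul_pow]; ring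
  refine (Finset.sum_le_sum hterm).trans ?_
  rw [← Finset.mul_sum]
  refine (mul_le_mul_of_nonneg_left hpack (by positivity)).trans (le_of_eq ?_)
  rw [div_pow]
  field_simp

theorem offdiagonal_sum_bounds
    (s N : ℕ) (hs_even : Even s) (hs : 6 ≤ s) (hN : 2 * s ≤ N)
    (ν : ℝ) (hν : π ≤ ν)
    (C : Finset Mat3) (hC : ∀ p ∈ C, IsSO3 p)
    (hsep : ∀ p ∈ C, ∀ q ∈ C, p ≠ q → ν / ((N : ℝ) + 1) ≤ rotAngle (q⁻¹ * p))
    (xj : Mat3) (hxj : xj ∈ C)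
    (ε : ℝ) (hε0 : 0 ≤ ε) (hε : ε ≤ 1 / 2)
    (x : Mat3) (hx : IsSO3 x) (hxd : rotAngle (xj⁻¹ * x) ≤ ε * ν / ((N : ℝ) + 1)) :
    (∑ p ∈ C.erase xj, |sigmaK s N x p|) ≤
        CConst 0 s * min ((27 / 124) * ((1 - ε) ^ s)⁻¹ + 1) (((1 - ε) ^ s)⁻¹) / ν ^ s ∧
    (∀ n : Fin 3,
      (∑ p ∈ C.erase xj, |Xy n (sigmaK s N) x p|) ≤
        CConst 1 s * min ((27 / 124) * ((1 - ε) ^ s)⁻¹ + 1) (((1 - ε) ^ s)⁻¹) *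
          ((N : ℝ) + 1) / ν ^ s) ∧
    (∀ i n : Fin 3,
      (∑ p ∈ C.erase xj, |Xx i (Xy n (sigmaK s N)) x p|) ≤
        CConst 2 s * min ((27 / 124) * ((1 - ε) ^ s)⁻¹ + 1) (((1 - ε) ^ s)⁻¹) *
          ((N : ℝ) + 1) ^ 2 / ν ^ s) ∧
    (∀ i n : Fin 3,
      (∑ p ∈ C.erase xj, |Xx i (Xx i (Xy n (sigmaK s N))) x p|) ≤
        1.2 * CConst 3 s * min ((27 / 124) * ((1 - ε) ^ s)⁻¹ + 1) (((1 - ε) ^ s)⁻¹) *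
          ((N : ℝ) + 1) ^ 3 / ν ^ s) ∧
    (∀ i j n : Fin 3, i ≠ j → j ≠ n → i ≠ n →
      ((∑ p ∈ C.erase xj,
          |Xx j (Xx i (sigmaK s N)) x p - (eps3 j i n / 2) * Xx n (sigmaK s N) x p|) ≤
        CConst 2 s * min ((27 / 124) * ((1 - ε) ^ s)⁻¹ + 1) (((1 - ε) ^ s)⁻¹) *
          ((N : ℝ) + 1) ^ 2 / ν ^ s) ∧
      ∀ k : Fin 3, k = i ∨ k = j ∨ k = n →
        (∑ p ∈ C.erase xj,
            |Xx j (Xx i (Xy k (sigmaK s N))) x p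
              - (eps3 j i n / 2) * Xx n (Xy k (sigmaK s N)) x p|) ≤
          1.2 * CConst 3 s * min ((27 / 124) * ((1 - ε) ^ s)⁻¹ + 1) (((1 - ε) ^ s)⁻¹) *
            ((N : ℝ) + 1) ^ 3 / ν ^ s) := by
  have hM : (0 : ℝ) ≤ (N : ℝ) + 1 := by positivity
  have hc : ∀ l, 0 ≤ cConst l s := fun l => cConst_nonneg hs
  have key : ∀ {g : Mat3 → ℝ} {c : ℝ}, 0 ≤ c →
      (∀ p, IsSO3 p → π / 2 ≤ ((N : ℝ) + 1) * rotAngle (p.transpose * x) →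
        |g p| ≤ c / (((N : ℝ) + 1) * rotAngle (p.transpose * x)) ^ s) →
      ∑ p ∈ C.erase xj, |g p| ≤ 124 * c * zetaNat (s - 2) *
        min ((27 / 124) * ((1 - ε) ^ s)⁻¹ + 1) (((1 - ε) ^ s)⁻¹) / ν ^ s :=
    sum_abs_le_of_decay hs hν hC hsep hxj hε0 hε hx hxd
  refine ⟨?_, fun n => ?_, fun i n => ?_, fun i n => ?_,
    fun i j n hij hjn hin => ⟨?_, fun k _ => ?_⟩⟩
  · refine (key (hc 0) fun p hp hω => ?_).trans (le_of_eq (by rw [CConst]))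
    rw [sigmaK, hp.inv_eq]
    exact abs_sigmaT_le hs_even hs hN hω
  · refine (key (mul_nonneg (hc 1) hM) fun p hp hω => ?_).trans
      (le_of_eq (by rw [CConst]; ring))
    rw [Xy_sigmaK n hx hp, abs_neg]
    exact abs_zonalDeriv_le hs_even hs hN (hp.transpose.mul hx) hω n
  · refine (key (mul_nonneg (hc 2) (pow_nonneg hM 2)) fun p hp hω => ?_).trans
      (le_of_eq (by rw [CConst]; ring))
    rw [Xx_Xy_sigmaK i n hx hp, abs_neg]
    exact abs_zonalDerivTwo_le hs_even hs hN (hp.transpose.mul hx) hω i n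
  · refine (key (mul_nonneg (mul_nonneg (by norm_num : (0 : ℝ) ≤ 1.2) (hc 3)) (pow_nonneg hM 3))
      fun p hp hω => ?_).trans (le_of_eq (by rw [CConst]; ring))
    have h := abs_zonalDerivThree_sub_le hs_even hs hN (hp.transpose.mul hx) hω i i n
    simp only [eps3_self, zero_mul, Finset.sum_const_zero, zero_div, sub_zero] at h
    rw [Xx_Xx_Xy_sigmaK i i n hx hp, abs_neg]
    exact h
  · refine (key (mul_nonneg (hc 2) (pow_nonneg hM 2)) fun p hp hω => ?_).trans
      (le_of_eq (by rw [CConst]; ring))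
    rw [Xx_Xx_sigmaK j i hx hp, Xx_sigmaK n hx hp]
    exact abs_zonalDerivTwo_sub_le hs_even hs hN (hp.transpose.mul hx) hω hij hjn hin
  · refine (key (mul_nonneg (mul_nonneg (by norm_num : (0 : ℝ) ≤ 1.2) (hc 3)) (pow_nonneg hM 3))
      fun p hp hω => ?_).trans (le_of_eq (by rw [CConst]; ring))
    have h := abs_zonalDerivThree_sub_le hs_even hs hN (hp.transpose.mul hx) hω j i k
    rw [sum_eps3_mul hij hjn hin] at h
    rw [Xx_Xx_Xy_sigmaK j i k hx hp, Xx_Xy_sigmaK n k hx hp, ← abs_neg]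
    refine le_trans (le_of_eq ?_) h
    congr 1
    ring
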